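/- arXiv:1603.09365 — 3 statements merged into one kernel-verified Lean document; each statement's English description precedes it below -/
import Mathlib

section
/- For every k ≥ 1 and every finite coloring of FIN_{≤k} (the union of FIN_j for j = 1,…,k), there exists an infinite block sequence (b_n) in FIN_k such that the tetris subspace TS_j(b_n) is monochromatic for every j = 1,2,…,k. -/
/-!
The proof follows the Galvin–Glazer method. Ultrafilters on `ℕ → ℕ` form a compact semigroup in
which `U ↦ U + V` is continuous. Let `GammaFIN j` be the closed set of those that concentrate on
`FIN j` and on functions with support arbitrarily far out; tetris operations act on these
ultrafilters and commute with sums (`map_add_of_gammaFIN`). The heart of the matter is the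
existence of `u j ∈ GammaFIN j`, for all `j`, such that every tetris operation `FIN j → FIN i` maps
`u j` to `u i` (the sequence is *coherent*), and `u i + u j = u (max i j)` for all `i, j ≤ k`
(`exists_coherent_sup`).

To find them, note first that the dilations `j • u` of a single idempotent `u ∈ GammaFIN 1` form a
coherent sequence of idempotents. If `t` is any coherent sequence of idempotents,
then the sums `t j + ⋯ + t 0` and `t 0 + ⋯ + t j` are again coherent: a nondecreasing
surjection `f` turns `t 0 + ⋯ + t j` into `t (f 0) + ⋯ + t (f j)`, in which every index up to
`f j` occurs and repeated summands collapse. Suppose that `t j + t i = t j` whenever `i ≤ m` and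
`i ≤ j`. Then the coherent sequences `s` that agree with `t` up to `m + 1` and satisfy
`s j + t (m + 1) = s j` for `j ≥ m + 1` form a closed subsemigroup, nonempty because it contains
the descending sums of `t`, and an idempotent of it extends the absorption property to `m + 1`
(`exists_right_absorbing`). Once `t j + t i = t j` holds for all `i ≤ k` and `j ≥ i`, the ascending
sums of `t` satisfy `u i + u j = u (max i j)`.

Given a coloring, each `u j` selects a color class. The block sequence is chosen recursively: when
the finitely many words in `b 0, …, b (n - 1)` are good in the sense of `StarMem`, then `u k`-almost
every `b n` extends all of them to good words under all tetris operations, of which only finitely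
many are distinct on `FIN k` (`exists_extension`).
-/

/-- `FIN k`: finitely supported functions `ℕ → {0,…,k}` attaining the maximum value `k`. -/
def FIN (k : ℕ) : Set (ℕ → ℕ) :=
  {b | (∀ n, b n ≤ k) ∧ {n | b n ≠ 0}.Finite ∧ ∃ n, b n = k}

/-- `Supp b < Supp b'`: every element of the support of `b` is smaller than
every element of the support of `b'`. -/
def SuppLT (b b' : ℕ → ℕ) : Prop :=
  ∀ m, b m ≠ 0 → ∀ m', b' m' ≠ 0 → m < m'

/-- `f` is (the extension to `ℕ` of) a nondecreasing surjection `{0,…,k} → {0,…,j}`. -/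
def IsTetrisFn (k j : ℕ) (f : ℕ → ℕ) : Prop :=
  (∀ i i', i' ≤ i → i ≤ k → f i' ≤ f i) ∧ (∀ i, i ≤ k → f i ≤ j) ∧
    ∀ m, m ≤ j → ∃ i, i ≤ k ∧ f i = m

/-- An infinite block sequence in `FIN k`. -/
def IsBlockSeq (k : ℕ) (b : ℕ → ℕ → ℕ) : Prop :=
  (∀ n, b n ∈ FIN k) ∧ ∀ n, SuppLT (b n) (b (n + 1))

/-- The tetris subspace `TS_j(b_n)` of `FIN j` generated by a block sequence in `FIN k`:
all elements of `FIN j` of the form `f_0 ∘ b_0 + ⋯ + f_n ∘ b_n`, where `f_i` is a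
nondecreasing surjection `{0,…,k} → {0,…,j_i}` and `max {j_0,…,j_n} = j`. -/
def TS (k j : ℕ) (b : ℕ → ℕ → ℕ) : Set (ℕ → ℕ) :=
  {a | a ∈ FIN j ∧ ∃ (n : ℕ) (js : ℕ → ℕ) (fs : ℕ → ℕ → ℕ),
    (∀ i, i ≤ n → js i ≤ j ∧ IsTetrisFn k (js i) (fs i)) ∧
    (∃ i, i ≤ n ∧ js i = j) ∧
    a = ∑ i ∈ Finset.range (n + 1), (fs i) ∘ (b i)}

open Filter Topology

attribute [local instance] Ultrafilter.add Ultrafilter.addSemigroup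

/-! ### Nondecreasing surjections -/

theorem IsTetrisFn.map_zero {k j : ℕ} {f : ℕ → ℕ} (hf : IsTetrisFn k j f) : f 0 = 0 := by
  obtain ⟨i, hi, h⟩ := hf.2.2 0 (Nat.zero_le _)
  have := hf.1 i 0 (Nat.zero_le _) hi
  omega

theorem IsTetrisFn.map_top {k j : ℕ} {f : ℕ → ℕ} (hf : IsTetrisFn k j f) : f k = j := by
  obtain ⟨i, hi, h⟩ := hf.2.2 j le_rfl
  have := hf.1 k i hi le_rfl
  have := hf.2.1 k le_rfl
  omega

theorem IsTetrisFn.le {k j : ℕ} {f : ℕ → ℕ} (hf : IsTetrisFn k j f) : j ≤ k := by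
  have h : Finset.range (j + 1) ⊆ (Finset.range (k + 1)).image f := by
    intro m hm
    obtain ⟨i, hi, h⟩ := hf.2.2 m (by simpa [Nat.lt_succ_iff] using hm)
    exact Finset.mem_image.2 ⟨i, by simpa [Nat.lt_succ_iff] using hi, h⟩
  have := (Finset.card_le_card h).trans Finset.card_image_le
  simpa using this

/-- A nondecreasing surjection from `{0,…,k+1}` restricts to a nondecreasing surjection from
`{0,…,k}` onto an initial segment, and it grows by at most one at the last step. -/
theorem IsTetrisFn.restrict {k j : ℕ} {f : ℕ → ℕ} (hf : IsTetrisFn (k + 1) j f) :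
    IsTetrisFn k (f k) f ∧ (j = f k ∨ j = f k + 1) := by
  have htop := hf.map_top
  have hk := hf.1 (k + 1) k (by omega) le_rfl
  refine ⟨⟨fun i i' h h' => hf.1 i i' h (by omega), fun i hi => hf.1 k i hi (by omega), ?_⟩, ?_⟩
  · intro m hm
    obtain ⟨i, hi, h⟩ := hf.2.2 m (by omega)
    rcases Nat.lt_or_ge k i with hlt | hle
    · have := hf.1 i k hlt.le hi
      exact ⟨k, le_rfl, by omega⟩
    · exact ⟨i, hle, h⟩
  · by_contra hne
    obtain ⟨i, hi, h⟩ := hf.2.2 (f k + 1) (by omega)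
    rcases Nat.lt_or_ge k i with hlt | hle
    · obtain rfl : i = k + 1 := by omega
      omega
    · have := hf.1 k i hle (by omega)
      omega

/-! ### Ultrafilters on `FIN j` -/

/-- The ultrafilters concentrating on `FIN j` and on functions with support arbitrarily far out. -/
def GammaFIN (j : ℕ) : Set (Ultrafilter (ℕ → ℕ)) :=
  {U | (∀ᶠ b : ℕ → ℕ in U, b ∈ FIN j) ∧ ∀ n, ∀ᶠ b : ℕ → ℕ in U, ∀ i < n, b i = 0}

theorem isClosed_gammaFIN (j : ℕ) : IsClosed (GammaFIN j) := by
  have : GammaFIN j = {U | FIN j ∈ U} ∩ ⋂ n : ℕ, {U | {b : ℕ → ℕ | ∀ i < n, b i = 0} ∈ U} := by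
    ext U
    simp only [GammaFIN, Set.mem_inter_iff, Set.mem_iInter]
    rfl
  rw [this]
  exact (ultrafilter_isClosed_basic _).inter
    (isClosed_iInter fun n => ultrafilter_isClosed_basic _)

theorem eventually_suppLT {j : ℕ} {U : Ultrafilter (ℕ → ℕ)} (hU : U ∈ GammaFIN j)
    {b : ℕ → ℕ} (hb : {n | b n ≠ 0}.Finite) : ∀ᶠ b' in U, SuppLT b b' := by
  obtain ⟨N, hN⟩ := hb.bddAbove
  filter_upwards [hU.2 (N + 1)] with b' hb' m hm m' hm'
  have h1 : m ≤ N := hN hm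
  by_contra hlt
  exact hm' (hb' m' (by omega))

theorem SuppLT.eq_zero {b b' : ℕ → ℕ} (h : SuppLT b b') (n : ℕ) : b n = 0 ∨ b' n = 0 := by
  by_contra hcon
  push Not at hcon
  exact lt_irrefl n (h n hcon.1 n hcon.2)

theorem add_mem_FIN {i j : ℕ} {b b' : ℕ → ℕ} (hb : b ∈ FIN i) (hb' : b' ∈ FIN j)
    (h : SuppLT b b') : b + b' ∈ FIN (i ⊔ j) := by
  refine ⟨fun n => ?_, (hb.2.1.union hb'.2.1).subset fun n hn => ?_, ?_⟩
  · have h1 := hb.1 n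
    have h2 := hb'.1 n
    rcases h.eq_zero n with h0 | h0 <;> simp [h0, h1, h2]
  · by_contra hcon
    simp only [Set.mem_union, Set.mem_ofPred_eq, not_or, not_not] at hcon
    exact hn (by simp [hcon.1, hcon.2])
  · obtain ⟨n, hn⟩ := hb.2.2
    obtain ⟨n', hn'⟩ := hb'.2.2
    rcases le_total i j with hij | hij
    · refine ⟨n', ?_⟩
      rcases h.eq_zero n' with h0 | h0
      · simp [h0, hn', hij]
      · have := hb.1 n'
        simp only [Pi.add_apply, sup_of_le_right hij]
        omega
    · refine ⟨n, ?_⟩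
      rcases h.eq_zero n with h0 | h0
      · have := hb'.1 n
        simp only [Pi.add_apply, sup_of_le_left hij]
        omega
      · simp [h0, hn, hij]

theorem add_mem_gammaFIN {i j : ℕ} {U V : Ultrafilter (ℕ → ℕ)} (hU : U ∈ GammaFIN i)
    (hV : V ∈ GammaFIN j) : U + V ∈ GammaFIN (i ⊔ j) := by
  refine ⟨?_, fun n => ?_⟩
  · rw [Ultrafilter.eventually_add]
    filter_upwards [hU.1] with b hb
    filter_upwards [hV.1, eventually_suppLT hV hb.2.1] with b' hb' h
    exact add_mem_FIN hb hb' h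
  · rw [Ultrafilter.eventually_add]
    filter_upwards [hU.2 n] with b hb
    filter_upwards [hV.2 n] with b' hb' m hm
    simp [hb m hm, hb' m hm]

/-- A map fixing `0` commutes with sums of functions of disjoint supports, hence with the sum of
ultrafilters in `GammaFIN`. -/
theorem map_add_of_gammaFIN {i j : ℕ} {U V : Ultrafilter (ℕ → ℕ)} (hU : U ∈ GammaFIN i)
    (hV : V ∈ GammaFIN j) {f : ℕ → ℕ} (hf : f 0 = 0) :
    (U + V).map (f ∘ ·) = U.map (f ∘ ·) + V.map (f ∘ ·) := by
  refine Ultrafilter.coe_inj.mp (Filter.ext' fun p => ?_)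
  rw [Ultrafilter.coe_map, eventually_map, Ultrafilter.eventually_add, Ultrafilter.eventually_add,
    Ultrafilter.coe_map _ U, eventually_map]
  refine eventually_congr ?_
  filter_upwards [hU.1] with b hb
  rw [Ultrafilter.coe_map, eventually_map]
  refine eventually_congr ?_
  filter_upwards [eventually_suppLT hV hb.2.1] with b' h
  have : f ∘ (b + b') = f ∘ b + f ∘ b' := by
    funext n
    rcases h.eq_zero n with h0 | h0 <;> simp [h0, hf]
  rw [this]

theorem eq_pure_zero {U : Ultrafilter (ℕ → ℕ)} (hU : U ∈ GammaFIN 0) : U = pure 0 := by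
  refine Ultrafilter.eq_of_le ?_
  rw [Ultrafilter.coe_pure, Filter.le_pure_iff]
  filter_upwards [hU.1] with b hb
  funext n
  simpa using hb.1 n

theorem add_gamma_zero (U : Ultrafilter (ℕ → ℕ)) {V : Ultrafilter (ℕ → ℕ)}
    (hV : V ∈ GammaFIN 0) : U + V = U := by
  refine Ultrafilter.coe_inj.mp (Filter.ext' fun p => ?_)
  rw [eq_pure_zero hV, Ultrafilter.eventually_add]
  simp

/-! ### Coherent sequences of ultrafilters -/

/-- A sequence of ultrafilters `t j ∈ GammaFIN j` such that every generalized tetris operation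
`FIN j → FIN i` maps `t j` to `t i`. -/
def Coherent (t : ℕ → Ultrafilter (ℕ → ℕ)) : Prop :=
  (∀ j, t j ∈ GammaFIN j) ∧
    ∀ j i f, IsTetrisFn j i f → (t j).map (f ∘ ·) = t i

theorem isClosed_coherent : IsClosed {t | Coherent t} := by
  have : {t | Coherent t} = (⋂ j, {t | t j ∈ GammaFIN j}) ∩
      ⋂ (j : ℕ) (i : ℕ) (f : ℕ → ℕ) (_ : IsTetrisFn j i f),
        {t : ℕ → Ultrafilter (ℕ → ℕ) | (t j).map (f ∘ ·) = t i} := by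
    ext t
    simp [Coherent]
  rw [this]
  refine IsClosed.inter (isClosed_iInter fun j => (isClosed_gammaFIN j).preimage
    (continuous_apply j)) ?_
  refine isClosed_iInter fun j => isClosed_iInter fun i => isClosed_iInter fun f =>
    isClosed_iInter fun _ => isClosed_eq ?_ (continuous_apply i)
  have hmap : Continuous (fun U : Ultrafilter (ℕ → ℕ) => U.map (f ∘ ·)) :=
    ultrafilterBasis_is_basis.continuous_iff.2 <| Set.forall_mem_range.mpr fun s ↦
      ultrafilter_isOpen_basic ((f ∘ ·) ⁻¹' s)
  exact hmap.comp (continuous_apply j)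

theorem Coherent.add {s t : ℕ → Ultrafilter (ℕ → ℕ)} (hs : Coherent s) (ht : Coherent t) :
    Coherent (s + t) := by
  refine ⟨fun j => ?_, fun j i f hf => ?_⟩
  · simpa using add_mem_gammaFIN (hs.1 j) (ht.1 j)
  · rw [Pi.add_apply, map_add_of_gammaFIN (hs.1 j) (ht.1 j) hf.map_zero, hs.2 j i f hf, ht.2 j i f hf]
    rfl

/-- The sum `t j + ⋯ + t 1 + t 0`. -/
def descSum (t : ℕ → Ultrafilter (ℕ → ℕ)) : ℕ → Ultrafilter (ℕ → ℕ)
  | 0 => t 0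
  | j + 1 => t (j + 1) + descSum t j

/-- The sum `t 0 + t 1 + ⋯ + t j`. -/
def ascSum (t : ℕ → Ultrafilter (ℕ → ℕ)) : ℕ → Ultrafilter (ℕ → ℕ)
  | 0 => t 0
  | j + 1 => ascSum t j + t (j + 1)

/-- A tetris operation `f` sends `t j + ⋯ + t 0` to `t (f j) + ⋯ + t (f 0)`, where repeated
summands collapse by idempotence. -/
theorem Coherent.descSum {t : ℕ → Ultrafilter (ℕ → ℕ)} (ht : Coherent t)
    (hid : ∀ j, t j + t j = t j) : Coherent (descSum t) := by
  have hmem : ∀ j, _root_.descSum t j ∈ GammaFIN j := by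
    intro j
    induction j with
    | zero => exact ht.1 0
    | succ j ih => simpa [_root_.descSum] using add_mem_gammaFIN (ht.1 (j + 1)) ih
  refine ⟨hmem, fun j => ?_⟩
  induction j with
  | zero =>
    intro i f hf
    obtain rfl : i = 0 := by simpa using hf.le
    exact ht.2 0 0 f hf
  | succ j ih =>
    intro i f hf
    obtain ⟨hr, hi⟩ := hf.restrict
    rw [_root_.descSum, map_add_of_gammaFIN (ht.1 _) (hmem j) hf.map_zero, ih _ f hr, ht.2 _ i f hf]
    rcases hi with hi | hi
    · rw [← hi]
      cases i with
      | zero => exact hid 0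
      | succ i => rw [_root_.descSum, ← add_assoc, hid]
    · rw [hi, _root_.descSum]

theorem Coherent.ascSum {t : ℕ → Ultrafilter (ℕ → ℕ)} (ht : Coherent t)
    (hid : ∀ j, t j + t j = t j) : Coherent (ascSum t) := by
  have hmem : ∀ j, _root_.ascSum t j ∈ GammaFIN j := by
    intro j
    induction j with
    | zero => exact ht.1 0
    | succ j ih => simpa [_root_.ascSum] using add_mem_gammaFIN ih (ht.1 (j + 1))
  refine ⟨hmem, fun j => ?_⟩
  induction j with
  | zero =>
    intro i f hf
    obtain rfl : i = 0 := by simpa using hf.le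
    exact ht.2 0 0 f hf
  | succ j ih =>
    intro i f hf
    obtain ⟨hr, hi⟩ := hf.restrict
    rw [_root_.ascSum, map_add_of_gammaFIN (hmem j) (ht.1 _) hf.map_zero, ih _ f hr, ht.2 _ i f hf]
    rcases hi with hi | hi
    · rw [← hi]
      cases i with
      | zero => exact hid 0
      | succ i => rw [_root_.ascSum, add_assoc, hid]
    · rw [hi, _root_.ascSum]

/-! ### Existence of coherent idempotents -/

/-- The dilations `j • u` of an idempotent `u ∈ GammaFIN 1` form a coherent sequence of idempotents. -/
theorem exists_coherent_idempotent : ∃ t, Coherent t ∧ ∀ j, t j + t j = t j := by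
  obtain ⟨u, hu, hid⟩ : ∃ u ∈ GammaFIN 1, u + u = u := by
    refine exists_idempotent_in_compact_add_subsemigroup Ultrafilter.continuous_add_left _ ?_
      (isClosed_gammaFIN 1).isCompact fun U hU V hV => by simpa using add_mem_gammaFIN hU hV
    refine ⟨(hyperfilter ℕ).map fun n => Pi.single n 1, ?_, fun n => ?_⟩
    · rw [Ultrafilter.coe_map, eventually_map]
      refine Eventually.of_forall fun n => ⟨fun m => ?_, ?_, n, by simp⟩
      · by_cases h : m = n
        · simp [h]
        · simp [h]
      · refine (Set.finite_singleton n).subset fun m hm => ?_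
        by_contra h
        exact hm (by simp [Set.mem_singleton_iff.not.1 h])
    · rw [Ultrafilter.coe_map, eventually_map]
      have : ∀ᶠ m in atTop, n ≤ m := eventually_ge_atTop n
      rw [← Nat.cofinite_eq_atTop] at this
      filter_upwards [this.filter_mono hyperfilter_le_cofinite] with m hm i hi
      have : i ≠ m := by omega
      simp [this]
  refine ⟨fun j => u.map ((j * ·) ∘ ·), ⟨fun j => ⟨?_, fun n => ?_⟩, fun j i f hf => ?_⟩,
    fun j => ?_⟩
  · rw [Ultrafilter.coe_map, eventually_map]
    filter_upwards [hu.1] with b hb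
    refine ⟨fun n => ?_, hb.2.1.subset fun n hn h0 => hn (by simp [h0]), ?_⟩
    · simpa using Nat.mul_le_mul_left j (hb.1 n)
    · obtain ⟨n, hn⟩ := hb.2.2
      exact ⟨n, by simp [hn]⟩
  · rw [Ultrafilter.coe_map, eventually_map]
    filter_upwards [hu.2 n] with b hb m hm
    simp [hb m hm]
  · refine Ultrafilter.coe_inj.mp ?_
    rw [Ultrafilter.coe_map, Ultrafilter.coe_map, Ultrafilter.coe_map, Filter.map_map]
    refine Filter.map_congr ?_
    filter_upwards [hu.1] with b hb
    funext n
    have h1 := hb.1 n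
    have h : b n = 0 ∨ b n = 1 := by omega
    rcases h with h | h
    · simp [h, hf.map_zero]
    · simp [h, hf.map_top]
  · rw [← map_add_of_gammaFIN hu hu (by simp), hid]

/-- Coherent idempotents with `t j + t i = t j` for `i ≤ j`, obtained by treating one level `i`
at a time. The descending sums witness that the closed subsemigroup to which the idempotent
theorem is applied is nonempty. -/
theorem exists_right_absorbing (m : ℕ) : ∃ t, Coherent t ∧ (∀ j, t j + t j = t j) ∧
    ∀ i ≤ m, ∀ j, i ≤ j → t j + t i = t j := by
  induction m with
  | zero =>
    obtain ⟨t, ht, hid⟩ := exists_coherent_idempotent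
    refine ⟨t, ht, hid, fun i hi j _ => ?_⟩
    obtain rfl : i = 0 := by omega
    exact add_gamma_zero _ (ht.1 0)
  | succ m ih =>
    obtain ⟨t, ht, hid, habs⟩ := ih
    have hlow : ∀ i ≤ m + 1, descSum t i = t i := by
      intro i
      induction i with
      | zero => intro _; rfl
      | succ i ih =>
        intro hi
        rw [descSum, ih (by omega), habs i (by omega) _ (by omega)]
    let T : Set (ℕ → Ultrafilter (ℕ → ℕ)) := {s | Coherent s} ∩
      ((⋂ i ∈ Set.Iic (m + 1), {s | s i = t i}) ∩
        ⋂ j ∈ Set.Ici (m + 1), {s | s j + t (m + 1) = s j})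
    have hmem : ∀ s, s ∈ T ↔ Coherent s ∧ (∀ i ≤ m + 1, s i = t i) ∧
        ∀ j, m + 1 ≤ j → s j + t (m + 1) = s j := by
      intro s
      simp [T]
    have hclosed : IsClosed T := by
      refine isClosed_coherent.inter (IsClosed.inter ?_ ?_)
      · exact isClosed_biInter fun i _ => isClosed_eq (continuous_apply i) continuous_const
      · exact isClosed_biInter fun j _ => isClosed_eq
          ((Ultrafilter.continuous_add_left _).comp (continuous_apply j)) (continuous_apply j)
    have hne : T.Nonempty := by
      refine ⟨descSum t, (hmem _).2 ⟨ht.descSum hid, hlow, fun j hj => ?_⟩⟩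
      induction j, hj using Nat.le_induction with
      | base => rw [hlow _ le_rfl, hid]
      | succ j hj ih => rw [descSum, add_assoc, ih]
    obtain ⟨s, hs, hsid⟩ := exists_idempotent_in_compact_add_subsemigroup
      (M := ℕ → Ultrafilter (ℕ → ℕ))
      (fun r => continuous_pi fun j =>
        (Ultrafilter.continuous_add_left (r j)).comp (continuous_apply j))
      T hne hclosed.isCompact (by
        intro x hx y hy
        rw [hmem] at hx hy ⊢
        refine ⟨hx.1.add hy.1, fun i hi => ?_, fun j hj => ?_⟩
        · rw [Pi.add_apply, hx.2.1 i hi, hy.2.1 i hi, hid]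
        · rw [Pi.add_apply, add_assoc, hy.2.2 j hj])
    rw [hmem] at hs
    refine ⟨s, hs.1, fun j => congrFun hsid j, fun i hi j hij => ?_⟩
    rcases Nat.lt_or_ge j (m + 1) with hj | hj
    · rw [hs.2.1 i hi, hs.2.1 j (by omega), habs i (by omega) j hij]
    · rw [hs.2.1 i hi]
      rcases Nat.lt_or_ge i (m + 1) with hi' | hi'
      · rw [← hs.2.2 j hj, add_assoc, habs i (by omega) _ (by omega)]
      · obtain rfl : i = m + 1 := by omega
        exact hs.2.2 j hj

/-- Coherent ultrafilters with `u i + u j = u (max i j)` for all `i, j ≤ k`: the ascending sums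
of right-absorbing ones. -/
theorem exists_coherent_sup (k : ℕ) : ∃ u, Coherent u ∧
    ∀ i ≤ k, ∀ j ≤ k, u i + u j = u (i ⊔ j) := by
  obtain ⟨t, ht, hid, habs⟩ := exists_right_absorbing k
  -- An ascending sum is absorbed on the right by any `t j` of at least the same level.
  have h1 : ∀ i ≤ k, ∀ j, i ≤ j → t j + ascSum t i = t j := by
    intro i
    induction i with
    | zero => exact fun hi j hj => habs 0 hi j hj
    | succ i ih =>
      intro hi j hj
      rw [ascSum, ← add_assoc, ih (by omega) j (by omega), habs _ hi j hj]
  have h2 : ∀ i ≤ k, ∀ j, i ≤ j → ascSum t j + ascSum t i = ascSum t j := by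
    intro i hi j hij
    cases j with
    | zero =>
      obtain rfl : i = 0 := by omega
      exact hid 0
    | succ j => rw [ascSum, add_assoc, h1 i hi _ hij]
  have h3 : ∀ i ≤ k, ∀ j, i ≤ j → ascSum t i + ascSum t j = ascSum t j := by
    intro i hi j hij
    induction j, hij using Nat.le_induction with
    | base => exact h2 i hi i le_rfl
    | succ j hj ih => rw [ascSum, ← add_assoc, ih]
  refine ⟨ascSum t, ht.ascSum hid, fun i hi j hj => ?_⟩
  rcases le_total i j with hij | hij
  · rw [sup_of_le_right hij, h3 i hi j hij]
  · rw [sup_of_le_left hij, h2 j hj i hij]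

/-! ### Construction of the block sequence -/

/-- The nondecreasing surjections with domain `{0,…,k}`, normalized to vanish above `k`. -/
def normTetris (k : ℕ) : Set (ℕ → ℕ) :=
  {f | IsTetrisFn k (f k) f ∧ ∀ x, k < x → f x = 0}

theorem finite_normTetris (k : ℕ) : (normTetris k).Finite := by
  refine (Set.finite_range fun (g : Fin (k + 1) → Fin (k + 1)) (x : ℕ) =>
    if h : x < k + 1 then (g ⟨x, h⟩ : ℕ) else 0).subset ?_
  intro f hf
  refine ⟨fun x => ⟨f x, ?_⟩, ?_⟩
  · have h1 := hf.1.2.1 x (by omega)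
    have h2 := hf.1.le
    omega
  · funext x
    by_cases h : x < k + 1
    · simp [h]
    · simp [h, hf.2 x (by omega)]

theorem exists_normTetris {k j : ℕ} {f : ℕ → ℕ} (hf : IsTetrisFn k j f) :
    ∃ g ∈ normTetris k, g k = j ∧ ∀ b ∈ FIN k, f ∘ b = g ∘ b := by
  let g : ℕ → ℕ := fun x => if x ≤ k then f x else 0
  have hg : ∀ x ≤ k, g x = f x := fun x hx => if_pos hx
  have htop : g k = j := by rw [hg k le_rfl, hf.map_top]
  refine ⟨g, ⟨?_, fun x hx => if_neg (by omega)⟩, htop, fun b hb => ?_⟩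
  · rw [htop]
    refine ⟨fun i i' h h' => ?_, fun i hi => ?_, fun m hm => ?_⟩
    · rw [hg i h', hg i' (by omega)]
      exact hf.1 i i' h h'
    · rw [hg i hi]
      exact hf.2.1 i hi
    · obtain ⟨i, hi, h⟩ := hf.2.2 m hm
      exact ⟨i, hi, by rw [hg i hi, h]⟩
  · funext n
    exact (hg _ (hb.1 n)).symm

/-- The elements `a` of `A j` such that `a + b ∈ A (max j i)` for `u i`-almost all `b`, for each
`i ≤ k`: the analogue of the set `A*` in the Galvin–Glazer argument. -/
def StarMem (k : ℕ) (u : ℕ → Ultrafilter (ℕ → ℕ)) (A : ℕ → Set (ℕ → ℕ)) (j : ℕ)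
    (a : ℕ → ℕ) : Prop :=
  a ∈ A j ∧ ∀ i ≤ k, ∀ᶠ b in u i, a + b ∈ A (j ⊔ i)

theorem StarMem.eventually {k : ℕ} {u : ℕ → Ultrafilter (ℕ → ℕ)} {A : ℕ → Set (ℕ → ℕ)}
    (hu : ∀ i ≤ k, ∀ j ≤ k, u i + u j = u (i ⊔ j)) {j : ℕ} {a : ℕ → ℕ}
    (ha : StarMem k u A j a) {i : ℕ} (hi : i ≤ k) :
    ∀ᶠ b in u i, StarMem k u A (j ⊔ i) (a + b) := by
  refine (ha.2 i hi).and ?_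
  have h : ∀ l : Fin (k + 1), ∀ᶠ b in u i, ∀ᶠ b' in u l, a + b + b' ∈ A (j ⊔ i ⊔ l) := by
    intro l
    have hl : (l : ℕ) ≤ k := by omega
    have := ha.2 (i ⊔ l) (sup_le hi hl)
    rw [← hu i hi l hl, Ultrafilter.eventually_add] at this
    simpa only [add_assoc, sup_assoc] using this
  filter_upwards [eventually_all.2 h] with b hb l hl
  exact hb ⟨l, by omega⟩

/-- The inductive step of the construction: `b` extends every word of a finite set `S` of good
words, under all tetris operations simultaneously. -/
theorem exists_extension {k : ℕ} {u : ℕ → Ultrafilter (ℕ → ℕ)} {A : ℕ → Set (ℕ → ℕ)}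
    (hcoh : Coherent u) (hu : ∀ i ≤ k, ∀ j ≤ k, u i + u j = u (i ⊔ j))
    (b₀ : ℕ → ℕ) (hb₀ : {n | b₀ n ≠ 0}.Finite) (S : Set (ℕ × (ℕ → ℕ))) (hS : S.Finite)
    (hSA : ∀ q ∈ S, StarMem k u A q.1 q.2) :
    ∃ b ∈ FIN k, SuppLT b₀ b ∧ ∃ S' : Set (ℕ × (ℕ → ℕ)), S'.Finite ∧
      (∀ q ∈ S', StarMem k u A q.1 q.2) ∧
      ∀ q ∈ S, ∀ i f, IsTetrisFn k i f → (q.1 ⊔ i, q.2 + f ∘ b) ∈ S' := by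
  have hev : ∀ᶠ b in u k, ∀ p ∈ S ×ˢ normTetris k,
      StarMem k u A (p.1.1 ⊔ p.2 k) (p.1.2 + p.2 ∘ b) := by
    rw [(hS.prod (finite_normTetris k)).eventually_all]
    rintro ⟨q, f⟩ ⟨hq, hf⟩
    have h := (hSA q hq).eventually hu hf.1.le
    rw [← hcoh.2 k _ f hf.1, Ultrafilter.coe_map, eventually_map] at h
    exact h
  obtain ⟨b, hb, hlt, hstar⟩ :=
    ((hcoh.1 k).1.and ((eventually_suppLT (hcoh.1 k) hb₀).and hev)).exists
  refine ⟨b, hb, hlt, (fun p : (ℕ × (ℕ → ℕ)) × (ℕ → ℕ) => (p.1.1 ⊔ p.2 k, p.1.2 + p.2 ∘ b)) ''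
    (S ×ˢ normTetris k), (hS.prod (finite_normTetris k)).image _, ?_, ?_⟩
  · rintro _ ⟨p, hp, rfl⟩
    exact hstar p hp
  · intro q hq i f hf
    obtain ⟨g, hg, hgi, hgb⟩ := exists_normTetris hf
    exact ⟨(q, g), ⟨hq, hg⟩, by simp only [hgi, hgb b hb]⟩

/-- Gowers' theorem for generalized tetris operations: for every finite coloring of
`FIN_{≤ k}` there is an infinite block sequence in `FIN k` all of whose tetris subspaces
`TS_j` are monochromatic, for `j = 1,…,k`. -/
theorem gowers_generalized_tetris (k : ℕ) (hk : 1 ≤ k) (r : ℕ) (c : (ℕ → ℕ) → ℕ)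
    (hc : ∀ b : ℕ → ℕ, (∃ j, 1 ≤ j ∧ j ≤ k ∧ b ∈ FIN j) → c b < r) :
    ∃ b : ℕ → ℕ → ℕ, IsBlockSeq k b ∧
      ∀ j, 1 ≤ j → j ≤ k → ∀ a ∈ TS k j b, ∀ a' ∈ TS k j b, c a = c a' := by
  obtain ⟨u, hcoh, hu⟩ := exists_coherent_sup k
  -- For each level `j` a color class that is `u j`-large.
  have hcol : ∀ j, 1 ≤ j → j ≤ k → ∃ e, ∀ᶠ b in u j, c b = e := by
    intro j h1 hj
    have h : (⋃ e ∈ Set.Iio r, {b | c b = e}) ∈ u j := by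
      filter_upwards [(hcoh.1 j).1] with b hb
      simpa using hc b ⟨j, h1, hj, hb⟩
    obtain ⟨e, -, he⟩ := (Ultrafilter.finite_biUnion_mem_iff (Set.finite_Iio r)).1 h
    exact ⟨e, he⟩
  choose! e he using hcol
  -- No condition at level `0`, where the only function is `0`.
  let A : ℕ → Set (ℕ → ℕ) := fun j => {a | 1 ≤ j → c a = e j}
  have hA : ∀ j ≤ k, ∀ᶠ b in u j, b ∈ A j := by
    intro j hj
    by_cases h1 : 1 ≤ j
    · filter_upwards [he j h1 hj] with b hb _
      exact hb
    · exact Eventually.of_forall fun b h => absurd h h1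
  let St := {p : (ℕ → ℕ) × Set (ℕ × (ℕ → ℕ)) // {n | p.1 n ≠ 0}.Finite ∧ p.2.Finite ∧
    ∀ q ∈ p.2, StarMem k u A q.1 q.2}
  have hstep : ∀ p : St, ∃ p' : St, p'.1.1 ∈ FIN k ∧ SuppLT p.1.1 p'.1.1 ∧
      ∀ q ∈ p.1.2, ∀ i f, IsTetrisFn k i f → (q.1 ⊔ i, q.2 + f ∘ p'.1.1) ∈ p'.1.2 := by
    rintro ⟨⟨b₀, S⟩, hb₀, hS, hSA⟩
    obtain ⟨b, hb, hlt, S', hS', hSA', h⟩ := exists_extension hcoh hu b₀ hb₀ S hS hSA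
    exact ⟨⟨(b, S'), hb.2.1, hS', hSA'⟩, hb, hlt, h⟩
  choose next hnext using hstep
  let start : St := ⟨(0, {(0, 0)}), by simp, Set.finite_singleton _, by
    rintro _ rfl
    refine ⟨fun h => absurd h (by simp), fun i hi => ?_⟩
    simpa using hA i hi⟩
  let seq : ℕ → St := fun n => Nat.rec start (fun _ p => next p) n
  have hseq : ∀ n, seq (n + 1) = next (seq n) := fun n => rfl
  let b : ℕ → ℕ → ℕ := fun n => (seq (n + 1)).1.1
  have hmem : ∀ (js : ℕ → ℕ) (fs : ℕ → ℕ → ℕ) n, (∀ i < n, IsTetrisFn k (js i) (fs i)) →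
      ((Finset.range n).sup js, ∑ i ∈ Finset.range n, fs i ∘ b i) ∈ (seq n).1.2 := by
    intro js fs n
    induction n with
    | zero => intro _; exact rfl
    | succ n ih =>
      intro h
      have := (hnext (seq n)).2.2 _ (ih fun i hi => h i (by omega)) _ _ (h n (by omega))
      rw [Finset.sum_range_succ, Finset.range_add_one, Finset.sup_insert, sup_comm]
      exact this
  refine ⟨b, ⟨fun n => (hnext (seq n)).1, fun n => (hnext (seq (n + 1))).2.1⟩, ?_⟩
  have key : ∀ j, 1 ≤ j → ∀ a ∈ TS k j b, c a = e j := by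
    rintro j h1 a ⟨-, n, js, fs, hfs, ⟨i, hi, hij⟩, rfl⟩
    have h := hmem js fs (n + 1) fun i hi => (hfs i (by omega)).2
    have hsup : (Finset.range (n + 1)).sup js = j := by
      apply le_antisymm
      · exact Finset.sup_le fun i hi => (hfs i (by simpa [Nat.lt_succ_iff] using hi)).1
      · rw [← hij]
        exact Finset.le_sup (f := js) (by simpa [Nat.lt_succ_iff] using hi)
    rw [hsup] at h
    exact ((seq (n + 1)).2.2.2 _ h).1 h1
  intro j h1 hj a ha a' ha'
  rw [key j h1 a ha, key j h1 a' ha']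
end

section
/- For all k, r, ℓ ≥ 1 there exists n ∈ ℕ such that for every r-coloring of FIN_{≤k}(n) (the union of FIN_j(n) for j = 1,…,k), there exists a block sequence (b_0, b_1, …, b_{ℓ-1}) in FIN_k(n) of length ℓ such that TS_j(b_0,…,b_{ℓ-1}) is monochromatic for every j = 1,2,…,k. -/
/-!
# Finitary Gowers' theorem for generalized tetris operations

A finitely supported function `ℕ → ℕ` is read as a word over the alphabet `ℕ`, the value `0` being
a letter like any other. Block sums become concatenations, and tetris operations become
letterwise maps induced by `f : ℕ → ℕ` with `f 0 = 0` that are nondecreasing with steps at most one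
(`Tetris.IsStep`).

The heart of the proof is a sequence `u 0, u 1, …, u k` of ultrafilters on words, with `u j`
concentrated on the words of maximum `j`, such that `f (u i) = u (f i)` for every tetris map `f`
and `u i * u j = u (max i j)` (`Tetris.exists_coh`). Sequences with the first property, called
coherent, form a closed subsemigroup of a product of spaces of ultrafilters; it is nonempty, since
the principal ultrafilters at the one-letter words `j` are coherent. If `v` is an idempotent
coherent sequence, the sequences of products `v j * ⋯ * v 0` and `v 0 * ⋯ * v j` are coherent too,
because tetris maps only produce repetitions in these products. Used alternately, these products
give the absorption law one index after the other.

From such ultrafilters, the Galvin–Glazer argument (`Tetris.exists_words`) yields, for any coloring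
of all words, words `w 0, …, w (ℓ - 1)` whose tetris combinations have a color depending on their
maximum only. The finitary statement follows by compactness: if every `n` admitted a bad
coloring `c n`, the limit of the `c n` along a nonprincipal ultrafilter on `ℕ` would be a coloring
which agrees with some bad `c n` on the finitely many tetris combinations of the words obtained.
-/

/-- `FINf k n`: functions `{0,…,n-1} → {0,…,k}` with maximum value `k`
(encoded as functions `ℕ → ℕ` vanishing from `n` on). -/
def FINf (k n : ℕ) : Set (ℕ → ℕ) :=
  {b | (∀ i, b i ≤ k) ∧ (∀ i, n ≤ i → b i = 0) ∧ ∃ i, i < n ∧ b i = k}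

/-- A block sequence `(b_0,…,b_{ℓ-1})` in `FINf k n`. -/
def IsBlockSeqFin (k n ℓ : ℕ) (b : ℕ → ℕ → ℕ) : Prop :=
  (∀ i, i < ℓ → b i ∈ FINf k n) ∧ ∀ i, i + 1 < ℓ → SuppLT (b i) (b (i + 1))

/-- The tetris subspace `TS_j(b_0,…,b_{m-1})` of `FINf j n`: all elements of `FINf j n`
of the form `f_0 ∘ b_0 + ⋯ + f_{m'} ∘ b_{m'}` with `m' < m`, where `f_i` is a nondecreasing
surjection `{0,…,k} → {0,…,j_i}` and `max {j_0,…,j_{m'}} = j`. -/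
def TSfin (k j n m : ℕ) (b : ℕ → ℕ → ℕ) : Set (ℕ → ℕ) :=
  {a | a ∈ FINf j n ∧ ∃ m', m' < m ∧ ∃ (js : ℕ → ℕ) (fs : ℕ → ℕ → ℕ),
    (∀ i, i ≤ m' → js i ≤ j ∧ IsTetrisFn k (js i) (fs i)) ∧
    (∃ i, i ≤ m' ∧ js i = j) ∧
    a = ∑ i ∈ Finset.range (m' + 1), (fs i) ∘ (b i)}

open Filter

attribute [local instance] Ultrafilter.semigroup

namespace Tetris

/-! ### Words, tetris maps and coherent sequences of ultrafilters -/

/-- The maps `f : ℕ → ℕ` with `f 0 = 0` that are nondecreasing with steps at most one. For each `i`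
they restrict to nondecreasing surjections `{0,…,i} → {0,…,f i}`, and every nondecreasing surjection
between such intervals is a restriction of one of them. -/
structure IsStep (f : ℕ → ℕ) : Prop where
  zero : f 0 = 0
  succ : ∀ x, f (x + 1) = f x ∨ f (x + 1) = f x + 1

lemma IsStep.mono {f : ℕ → ℕ} (hf : IsStep f) : Monotone f :=
  monotone_nat_of_le_succ fun x => by rcases hf.succ x with h | h <;> omega

lemma IsStep.le {f : ℕ → ℕ} (hf : IsStep f) (x : ℕ) : f x ≤ x := by
  induction x with
  | zero => exact hf.zero.le
  | succ x ih => rcases hf.succ x with h | h <;> omega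

/-- The words over `ℕ` whose largest letter is exactly `j`. -/
def Lvl (j : ℕ) : Set (FreeMonoid ℕ) :=
  {w | (∀ x ∈ FreeMonoid.toList w, x ≤ j) ∧ j ∈ FreeMonoid.toList w}

lemma Lvl.mul_left {i j : ℕ} (h : i ≤ j) {v w : FreeMonoid ℕ} (hv : v ∈ Lvl i) (hw : w ∈ Lvl j) :
    v * w ∈ Lvl j := by
  refine ⟨fun x hx => ?_, ?_⟩
  · rw [FreeMonoid.toList_mul, List.mem_append] at hx
    exact hx.elim (fun hx => (hv.1 x hx).trans h) (hw.1 x)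
  · rw [FreeMonoid.toList_mul, List.mem_append]
    exact Or.inr hw.2

lemma Lvl.mul_right {i j : ℕ} (h : i ≤ j) {v w : FreeMonoid ℕ} (hv : v ∈ Lvl i) (hw : w ∈ Lvl j) :
    w * v ∈ Lvl j := by
  refine ⟨fun x hx => ?_, ?_⟩
  · rw [FreeMonoid.toList_mul, List.mem_append] at hx
    exact hx.elim (hw.1 x) (fun hx => (hv.1 x hx).trans h)
  · rw [FreeMonoid.toList_mul, List.mem_append]
    exact Or.inl hw.2

/-- The action on ultrafilters on words of a map applied letter by letter. -/
noncomputable def act (f : ℕ → ℕ) (u : Ultrafilter (FreeMonoid ℕ)) : Ultrafilter (FreeMonoid ℕ) :=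
  u.map (FreeMonoid.map f)

lemma act_mul (f : ℕ → ℕ) (u v : Ultrafilter (FreeMonoid ℕ)) :
    act f (u * v) = act f u * act f v := by
  refine Ultrafilter.coe_inj.mp <| Filter.ext' fun p => ?_
  simp only [act, Ultrafilter.coe_map, eventually_map, Ultrafilter.eventually_mul, map_mul]

lemma continuous_act (f : ℕ → ℕ) : Continuous (act f) :=
  ultrafilterBasis_is_basis.continuous_iff.2 <| Set.forall_mem_range.mpr fun s ↦
    ultrafilter_isOpen_basic (FreeMonoid.map f ⁻¹' s)

/-- A coherent sequence of ultrafilters: `u j` lives on the words with maximum `j`, and every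
tetris map `f` sends `u j` to `u (f j)`. -/
def Coh (u : ℕ → Ultrafilter (FreeMonoid ℕ)) : Prop :=
  (∀ j, Lvl j ∈ u j) ∧ ∀ f, IsStep f → ∀ j, act f (u j) = u (f j)

lemma coh_pure : Coh fun j => pure (FreeMonoid.of j) := by
  refine ⟨fun j => ?_, fun f _ j => ?_⟩
  · rw [Ultrafilter.mem_pure]
    exact ⟨by simp, by simp⟩
  · simp [act]

lemma Coh.mul {u v : ℕ → Ultrafilter (FreeMonoid ℕ)} (hu : Coh u) (hv : Coh v) : Coh (u * v) := by
  refine ⟨fun j => ?_, fun f hf j => ?_⟩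
  · change ∀ᶠ w in ↑(u j * v j), w ∈ Lvl j
    rw [Ultrafilter.eventually_mul]
    filter_upwards [hu.1 j] with a ha
    filter_upwards [hv.1 j] with b hb
    exact Lvl.mul_left le_rfl ha hb
  · simp only [Pi.mul_apply, act_mul, hu.2 f hf, hv.2 f hf]

lemma isClosed_coh : IsClosed {u | Coh u} := by
  have : {u | Coh u} = (⋂ j, {u : ℕ → Ultrafilter (FreeMonoid ℕ) | Lvl j ∈ u j}) ∩
      ⋂ f, ⋂ (_ : IsStep f), ⋂ j, {u | act f (u j) = u (f j)} := by
    ext u; simp [Coh]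
  rw [this]
  refine (isClosed_iInter fun j => ?_).inter
    (isClosed_iInter fun f => isClosed_iInter fun _ => isClosed_iInter fun j => ?_)
  · have h : Continuous fun u : ℕ → Ultrafilter (FreeMonoid ℕ) => u j := continuous_apply j
    exact (ultrafilter_isClosed_basic (Lvl j)).preimage h
  · exact isClosed_eq ((continuous_act f).comp (continuous_apply j)) (continuous_apply (f j))

lemma exists_idem (s : Set (ℕ → Ultrafilter (FreeMonoid ℕ))) (hne : s.Nonempty) (hc : IsClosed s)
    (hmul : ∀ᵉ (x ∈ s) (y ∈ s), x * y ∈ s) : ∃ v ∈ s, v * v = v := by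
  refine exists_idempotent_in_compact_subsemigroup (fun r => ?_) s hne hc.isCompact hmul
  exact continuous_pi fun j => (Ultrafilter.continuous_mul_left (r j)).comp (continuous_apply j)

/-! ### The absorption law -/

/-- The descending products `v j * v (j - 1) * ⋯ * v 0`. -/
noncomputable def desc (v : ℕ → Ultrafilter (FreeMonoid ℕ)) : ℕ → Ultrafilter (FreeMonoid ℕ)
  | 0 => v 0
  | j + 1 => v (j + 1) * desc v j

/-- The ascending products `v 0 * v 1 * ⋯ * v j`. -/
noncomputable def asc (v : ℕ → Ultrafilter (FreeMonoid ℕ)) : ℕ → Ultrafilter (FreeMonoid ℕ)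
  | 0 => v 0
  | j + 1 => asc v j * v (j + 1)

/-- A tetris map turns the descending product of index `j` into a weakly decreasing product of the
`v i`, whose repetitions are absorbed by idempotence. -/
lemma Coh.desc {v : ℕ → Ultrafilter (FreeMonoid ℕ)} (hv : Coh v) (hi : v * v = v) :
    Coh (desc v) := by
  have hi' : ∀ j, v j * v j = v j := fun j => congrFun hi j
  have habs : ∀ j, v j * Tetris.desc v j = Tetris.desc v j := by
    rintro (_ | j)
    · exact hi' 0
    · simp only [Tetris.desc, ← mul_assoc, hi']
  refine ⟨fun j => ?_, fun f hf j => ?_⟩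
  · induction j with
    | zero => exact hv.1 0
    | succ j ih =>
      change ∀ᶠ w in ↑(v (j + 1) * Tetris.desc v j), w ∈ Lvl (j + 1)
      rw [Ultrafilter.eventually_mul]
      filter_upwards [hv.1 (j + 1)] with a ha
      filter_upwards [ih] with b hb
      exact Lvl.mul_right (Nat.le_succ j) hb ha
  · induction j with
    | zero => rw [hf.zero]; simpa only [Tetris.desc, hf.zero] using hv.2 f hf 0
    | succ j ih =>
      simp only [Tetris.desc, act_mul, ih, hv.2 f hf]
      rcases hf.succ j with h | h
      · rw [h, habs]
      · rw [h]; rfl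

lemma Coh.asc {v : ℕ → Ultrafilter (FreeMonoid ℕ)} (hv : Coh v) (hi : v * v = v) :
    Coh (asc v) := by
  have hi' : ∀ j, v j * v j = v j := fun j => congrFun hi j
  have habs : ∀ j, Tetris.asc v j * v j = Tetris.asc v j := by
    rintro (_ | j)
    · exact hi' 0
    · simp only [Tetris.asc, mul_assoc, hi']
  refine ⟨fun j => ?_, fun f hf j => ?_⟩
  · induction j with
    | zero => exact hv.1 0
    | succ j ih =>
      change ∀ᶠ w in ↑(Tetris.asc v j * v (j + 1)), w ∈ Lvl (j + 1)
      rw [Ultrafilter.eventually_mul]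
      filter_upwards [ih] with a ha
      filter_upwards [hv.1 (j + 1)] with b hb
      exact Lvl.mul_left (Nat.le_succ j) ha hb
  · induction j with
    | zero => rw [hf.zero]; simpa only [Tetris.asc, hf.zero] using hv.2 f hf 0
    | succ j ih =>
      simp only [Tetris.asc, act_mul, ih, hv.2 f hf]
      rcases hf.succ j with h | h
      · rw [h, habs]
      · rw [h]; rfl

/-- Coherent sequences with `u i * u j = u (max i j)` on an initial segment of indices. The segment
is extended by one index at a time: multiplying an idempotent coherent sequence on the right by its
lower terms gives absorption on the right, a condition which defines a closed subsemigroup; an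
idempotent of the latter, multiplied on the left by its lower terms, absorbs on both sides. -/
lemma exists_coh (m : ℕ) : ∃ u, Coh u ∧ ∀ i < m, ∀ j < m, u i * u j = u (max i j) := by
  induction m with
  | zero => exact ⟨_, coh_pure, by simp⟩
  | succ m ih =>
    obtain ⟨u, hu, hrel⟩ := ih
    have huclosed : IsClosed {v : ℕ → Ultrafilter (FreeMonoid ℕ) | ∀ j < m, v j = u j} := by
      simp only [Set.ofPred_forall]
      exact isClosed_iInter fun j => isClosed_iInter fun _ =>
        isClosed_eq (continuous_apply j) continuous_const
    have hidem : ∀ j < m, u j * u j = u j := fun j hj => by simpa using hrel j hj j hj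
    obtain ⟨v, ⟨hv, hvu⟩, hvi⟩ := exists_idem ({v | Coh v} ∩ {v | ∀ j < m, v j = u j})
      ⟨u, hu, fun _ _ => rfl⟩ (isClosed_coh.inter huclosed) (by
        rintro x ⟨hx, hx'⟩ y ⟨hy, hy'⟩
        exact ⟨hx.mul hy, fun j hj => by rw [Pi.mul_apply, hx' j hj, hy' j hj, hidem j hj]⟩)
    have hdesc : ∀ j < m, desc v j = u j := by
      intro j
      induction j with
      | zero => exact hvu 0
      | succ j ih =>
        intro hj
        rw [desc, ih (by omega), hvu _ hj, hrel _ hj _ (by omega), max_eq_left (by omega)]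
    have hdescm : ∀ j < m, desc v m * u j = desc v m := by
      intro j hj
      obtain ⟨m, rfl⟩ : ∃ m', m = m' + 1 := ⟨m - 1, by omega⟩
      rw [desc, hdesc m (by omega), mul_assoc, hrel _ (by omega) _ hj, max_eq_left (by omega)]
    obtain ⟨w, ⟨⟨hw, hwu⟩, hwm⟩, hwi⟩ := exists_idem
      (({v | Coh v} ∩ {v | ∀ j < m, v j = u j}) ∩ {v | ∀ j < m, v m * u j = v m})
      ⟨desc v, ⟨hv.desc hvi, hdesc⟩, hdescm⟩
      ((isClosed_coh.inter huclosed).inter (by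
        simp only [Set.ofPred_forall]
        exact isClosed_iInter fun j => isClosed_iInter fun _ => isClosed_eq
          ((Ultrafilter.continuous_mul_left (u j)).comp (continuous_apply m))
          (continuous_apply m))) (by
        rintro x ⟨⟨hx, hx'⟩, hx''⟩ y ⟨⟨hy, hy'⟩, hy''⟩
        refine ⟨⟨hx.mul hy, fun j hj => ?_⟩, fun j hj => ?_⟩
        · rw [Pi.mul_apply, hx' j hj, hy' j hj, hidem j hj]
        · rw [Pi.mul_apply, mul_assoc, hy'' j hj])
    have hasc : ∀ j < m, asc w j = u j := by
      intro j
      induction j with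
      | zero => exact hwu 0
      | succ j ih =>
        intro hj
        rw [asc, ih (by omega), hwu _ hj, hrel _ (by omega) _ hj, max_eq_right (by omega)]
    have hwmm : w m * w m = w m := congrFun hwi m
    have hright : ∀ j < m, asc w m * u j = asc w m := by
      intro j hj
      obtain ⟨m, rfl⟩ : ∃ m', m = m' + 1 := ⟨m - 1, by omega⟩
      rw [asc, mul_assoc, hwm j hj]
    have hleft : ∀ j < m, u j * asc w m = asc w m := by
      intro j hj
      obtain ⟨m, rfl⟩ : ∃ m', m = m' + 1 := ⟨m - 1, by omega⟩
      rw [asc, hasc m (by omega), ← mul_assoc, hrel _ hj _ (by omega), max_eq_right (by omega)]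
    have hself : asc w m * asc w m = asc w m := by
      rcases m with _ | m
      · exact hwmm
      · have h := hwm m (by omega)
        rw [asc, hasc m (by omega)]
        rw [mul_assoc, ← mul_assoc (w (m + 1)), h, hwmm]
    refine ⟨asc w, hw.asc hwi, fun i hi j hj => ?_⟩
    rcases Nat.lt_succ_iff_lt_or_eq.1 hi with hi | rfl <;>
      rcases Nat.lt_succ_iff_lt_or_eq.1 hj with hj | hj
    · rw [hasc i hi, hasc j hj, hasc _ (max_lt hi hj), hrel i hi j hj]
    · rw [hj, hasc i hi, hleft i hi, max_eq_right hi.le]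
    · rw [hasc j hj, hright j hj, max_eq_left hj.le]
    · rw [hj, hself, max_self]


/-! ### Words with monochromatic tetris combinations -/

/-- The tetris maps that are constant from `k` on: a finite set containing an extension of every
nondecreasing surjection with domain `{0,…,k}`. -/
def Steps (k : ℕ) : Set (ℕ → ℕ) := {f | IsStep f ∧ ∀ x, f x = f (min x k)}

lemma steps_finite (k : ℕ) : (Steps k).Finite := by
  refine (Set.finite_range fun (g : Fin (k + 1) → Fin (k + 1)) (x : ℕ) =>
    (g ⟨min x k, by omega⟩ : ℕ)).subset ?_
  rintro f ⟨hf, hk⟩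
  refine ⟨fun x => ⟨f x, by have := hf.le x; omega⟩, ?_⟩
  funext x
  exact (hk x).symm

lemma mem_steps {k j : ℕ} {f : ℕ → ℕ} (hf : IsTetrisFn k j f) :
    (fun x => f (min x k)) ∈ Steps k := by
  obtain ⟨hmono, hle, hsurj⟩ := hf
  refine ⟨⟨?_, fun x => ?_⟩, fun x => by simp⟩
  · obtain ⟨i, hi, hi0⟩ := hsurj 0 (by omega)
    have := hmono i 0 (by omega) hi
    simp only [Nat.zero_min]
    omega
  · rcases le_or_gt k x with hx | hx
    · left
      rw [min_eq_right hx, min_eq_right (by omega)]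
    · rw [min_eq_left hx.le, min_eq_left (by omega)]
      have h1 := hmono (x + 1) x (by omega) (by omega)
      by_contra hcon
      obtain ⟨i, hi, hi'⟩ := hsurj (f x + 1) (by have := hle (x + 1) (by omega); omega)
      rcases le_or_gt i x with h | h
      · have := hmono x i h (by omega)
        omega
      · have := hmono i (x + 1) h hi
        omega

lemma apply_top {k j : ℕ} {f : ℕ → ℕ} (hf : IsTetrisFn k j f) : f k = j := by
  obtain ⟨hmono, hle, hsurj⟩ := hf
  obtain ⟨i, hi, hi'⟩ := hsurj j le_rfl
  have := hmono k i hi le_rfl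
  have := hle k le_rfl
  omega

/-- The concatenation of `f 0 (w 0), …, f (m - 1) (w (m - 1))`, the maps `f i` acting letterwise. -/
def glue : ℕ → (ℕ → ℕ → ℕ) → (ℕ → FreeMonoid ℕ) → FreeMonoid ℕ
  | 0, _, _ => 1
  | m + 1, f, w => FreeMonoid.map (f 0) (w 0) * glue m (fun i => f (i + 1)) (fun i => w (i + 1))

/-- The Galvin–Glazer construction: given members `A j` of the ultrafilters `u j`, there are words
`w 0, w 1, …` all of whose tetris combinations lie in the set `A j` of the appropriate index. -/
lemma exists_words {k : ℕ} {u : ℕ → Ultrafilter (FreeMonoid ℕ)} (hu : Coh u)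
    (hrel : ∀ i < k + 1, ∀ j < k + 1, u i * u j = u (max i j)) (ℓ : ℕ) :
    ∀ A : ℕ → Set (FreeMonoid ℕ), (∀ j ≤ k, A j ∈ u j) →
      ∃ w : ℕ → FreeMonoid ℕ, (∀ i, i < ℓ → w i ∈ Lvl k) ∧
        ∀ m < ℓ, ∀ f : ℕ → ℕ → ℕ, (∀ i ≤ m, f i ∈ Steps k) →
          glue (m + 1) f w ∈ A ((Finset.range (m + 1)).sup fun i => f i k) := by
  induction ℓ with
  | zero => exact fun A _ => ⟨fun _ => 1, by simp, by simp⟩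
  | succ ℓ ih =>
    intro A hA
    have h1 : ∀ᶠ w in (u k : Filter _), ∀ f ∈ Steps k, FreeMonoid.map f w ∈ A (f k) := by
      refine (eventually_all_finite (steps_finite k)).2 fun f hf => ?_
      have h := hA (f k) (hf.1.le k)
      rw [← hu.2 f hf.1 k] at h
      exact h
    have h2 : ∀ᶠ w in (u k : Filter _), ∀ f ∈ Steps k, ∀ j ∈ Set.Iic k,
        ∀ᶠ x in (u j : Filter _), FreeMonoid.map f w * x ∈ A (max (f k) j) := by
      refine (eventually_all_finite (steps_finite k)).2 fun f hf =>
        (eventually_all_finite (Set.finite_Iic k)).2 fun j hj => ?_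
      have hfk := hf.1.le k
      have hj' : j ≤ k := hj
      have h : ∀ᶠ x in ((act f (u k) * u j : Ultrafilter _) : Filter _),
          x ∈ A (max (f k) j) := by
        rw [hu.2 f hf.1 k, hrel _ (by omega) _ (by omega)]
        exact hA _ (max_le hfk hj)
      rw [Ultrafilter.eventually_mul] at h
      exact h
    obtain ⟨w₀, ⟨hw₀, hw₁⟩, hw₂⟩ := ((Filter.Eventually.and (hu.1 k) h1).and h2).exists
    obtain ⟨w, hw, hglue⟩ := ih
      (fun j => {x | ∀ f ∈ Steps k, FreeMonoid.map f w₀ * x ∈ A (max (f k) j)})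
      (fun j hj => (eventually_all_finite (steps_finite k)).2 fun f hf => hw₂ f hf j hj)
    refine ⟨fun i => Nat.casesOn i w₀ w, ?_, ?_⟩
    · rintro (_ | i) hi
      · exact hw₀
      · exact hw i (by omega)
    · rintro (_ | m) hm f hf
      · simpa [glue] using hw₁ (f 0) (hf 0 le_rfl)
      · have h := hglue m (by omega) (fun i => f (i + 1)) (fun i hi => hf (i + 1) (by omega))
          (f 0) (hf 0 (by omega))
        have hs : (Finset.range (m + 1 + 1)).sup (fun i => f i k) =
            max (f 0 k) ((Finset.range (m + 1)).sup fun i => f (i + 1) k) := by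
          rw [Finset.range_add_one', Finset.sup_insert, Finset.sup_map]
          rfl
        rw [hs]
        exact h

/-! ### From words to functions -/

/-- The function `ℕ → ℕ` that reads the word `w` from position `o` on and is zero elsewhere. -/
def place (o : ℕ) (w : FreeMonoid ℕ) (x : ℕ) : ℕ :=
  if x < o then 0 else (FreeMonoid.toList w).getD (x - o) 0

lemma place_mul (o : ℕ) (v w : FreeMonoid ℕ) :
    place o (v * w) = place o v + place (o + v.length) w := by
  funext x
  have hl : v.length = (FreeMonoid.toList v).length := rfl
  simp only [place, Pi.add_apply, FreeMonoid.toList_mul, hl]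
  split_ifs with h1 h2 h2
  · rfl
  · omega
  · rw [List.getD_append _ _ _ _ (by omega), add_zero]
  · rw [List.getD_append_right _ _ _ _ (by omega),
      List.getD_eq_default (l := FreeMonoid.toList v) _ (by omega), zero_add, Nat.sub_sub]

lemma place_map (o : ℕ) {f : ℕ → ℕ} (hf : f 0 = 0) (w : FreeMonoid ℕ) :
    place o (FreeMonoid.map f w) = f ∘ place o w := by
  funext x
  simp only [place, Function.comp, FreeMonoid.toList_map]
  split_ifs
  · exact hf.symm
  · conv_lhs => rw [← hf]
    exact List.getD_map ..

lemma place_ne_zero {o : ℕ} {w : FreeMonoid ℕ} {x : ℕ} (h : place o w x ≠ 0) :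
    o ≤ x ∧ x < o + w.length := by
  have hl : w.length = (FreeMonoid.toList w).length := rfl
  unfold place at h
  split_ifs at h with h1
  · exact absurd rfl h
  · refine ⟨by omega, ?_⟩
    by_contra h2
    exact h (List.getD_eq_default _ _ (by omega))

lemma place_le {o k : ℕ} {w : FreeMonoid ℕ} (hw : w ∈ Lvl k) (x : ℕ) : place o w x ≤ k := by
  simp only [place]
  split_ifs
  · omega
  · rcases lt_or_ge (x - o) (FreeMonoid.toList w).length with h | h
    · rw [List.getD_eq_getElem _ _ h]
      exact hw.1 _ (List.getElem_mem h)
    · rw [List.getD_eq_default _ _ h]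
      omega

lemma exists_place_eq {o k : ℕ} {w : FreeMonoid ℕ} (hw : w ∈ Lvl k) :
    ∃ x, x < o + w.length ∧ place o w x = k := by
  obtain ⟨i, hi, hik⟩ := List.getElem_of_mem hw.2
  refine ⟨o + i, Nat.add_lt_add_left hi o, ?_⟩
  rw [place, if_neg (by omega), Nat.add_sub_cancel_left, List.getD_eq_getElem _ _ hi, hik]

/-- The total length of the first `i` words, i.e. the starting position of `w i`. -/
def off (w : ℕ → FreeMonoid ℕ) (i : ℕ) : ℕ := ∑ j ∈ Finset.range i, (w j).length

lemma off_succ (w : ℕ → FreeMonoid ℕ) (i : ℕ) : off w (i + 1) = off w i + (w i).length :=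
  Finset.sum_range_succ _ _

lemma off_mono (w : ℕ → FreeMonoid ℕ) : Monotone (off w) :=
  monotone_nat_of_le_succ fun i => by rw [off_succ]; omega

lemma place_glue (m : ℕ) : ∀ (o : ℕ) (f : ℕ → ℕ → ℕ) (w : ℕ → FreeMonoid ℕ),
    (∀ i < m, f i 0 = 0) →
      place o (glue m f w) = ∑ i ∈ Finset.range m, f i ∘ place (o + off w i) (w i) := by
  induction m with
  | zero =>
    intro o f w _
    funext x
    by_contra h
    have h' := place_ne_zero (o := o) (w := 1) (x := x) (by simpa [glue] using h)
    rw [FreeMonoid.length_one] at h'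
    omega
  | succ m ih =>
    intro o f w hf
    have hlen : (FreeMonoid.map (f 0) (w 0)).length = (w 0).length := List.length_map ..
    rw [glue, place_mul, place_map _ (hf 0 (by omega)), hlen,
      ih _ _ _ (fun i hi => hf (i + 1) (by omega)), Finset.sum_range_succ', add_comm]
    have h0 : off w 0 = 0 := rfl
    have hs : ∀ i, off w (i + 1) = (w 0).length + off (fun i => w (i + 1)) i := fun i => by
      rw [off, Finset.sum_range_succ', add_comm]; rfl
    simp only [h0, hs, add_zero, add_assoc]

/-! ### Compactness -/

/-- A bounded function is constant almost everywhere for an ultrafilter. -/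
lemma eventually_const {α : Type*} (U : Ultrafilter α) (r : ℕ) (h : α → ℕ) (hr : ∀ a, h a < r) :
    ∃ g, ∀ᶠ a in (U : Filter α), h a = g := by
  have hU : (⋃ g ∈ Set.Iio r, {a | h a = g}) ∈ U := by
    refine Filter.mem_of_superset Filter.univ_mem fun a _ => ?_
    simpa using hr a
  obtain ⟨g, -, hg⟩ := (Ultrafilter.finite_biUnion_mem_iff (Set.finite_Iio r)).1 hU
  exact ⟨g, hg⟩

lemma finite_box (k N : ℕ) : {a : ℕ → ℕ | (∀ i, a i ≤ k) ∧ ∀ i, N ≤ i → a i = 0}.Finite := by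
  refine (Set.finite_range fun (g : Fin N → Fin (k + 1)) (x : ℕ) =>
    if h : x < N then (g ⟨x, h⟩ : ℕ) else 0).subset ?_
  rintro a ⟨ha, ha'⟩
  refine ⟨fun x => ⟨a x, Nat.lt_succ_of_le (ha x)⟩, ?_⟩
  funext x
  by_cases h : x < N
  · simp [h]
  · simp [h, ha' x (by omega)]

end Tetris

open Tetris in
/-- Finitary Gowers' theorem for generalized tetris operations. -/
theorem gowers_generalized_tetris_finitary (k r ℓ : ℕ) (hk : 1 ≤ k) (hr : 1 ≤ r)
    (hℓ : 1 ≤ ℓ) :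
    ∃ n : ℕ, ∀ c : (ℕ → ℕ) → ℕ,
      (∀ b : ℕ → ℕ, (∃ j, 1 ≤ j ∧ j ≤ k ∧ b ∈ FINf j n) → c b < r) →
      ∃ b : ℕ → ℕ → ℕ, IsBlockSeqFin k n ℓ b ∧
        ∀ j, 1 ≤ j → j ≤ k →
          ∀ a ∈ TSfin k j n ℓ b, ∀ a' ∈ TSfin k j n ℓ b, c a = c a' := by
  by_contra! hbad
  choose c hc hbad using hbad
  -- The limit coloring; reducing modulo `r` makes it defined on all functions.
  have hlim : ∀ a : ℕ → ℕ, ∃ g, ∀ᶠ n in (hyperfilter ℕ : Filter ℕ), c n a % r = g := fun a =>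
    eventually_const _ r _ fun n => Nat.mod_lt _ hr
  choose d hd using hlim
  have hdr : ∀ a, d a < r := fun a => by
    obtain ⟨n, hn⟩ := (hd a).exists
    rw [← hn]
    exact Nat.mod_lt _ hr
  obtain ⟨u, hu, hrel⟩ := exists_coh (k + 1)
  have hcol : ∀ j, ∃ g, ∀ᶠ w in (u j : Filter _), d (place 0 w) = g := fun j =>
    eventually_const _ r _ fun w => hdr _
  choose g hg using hcol
  obtain ⟨w, hw, hglue⟩ := exists_words hu hrel ℓ (fun j => {w | d (place 0 w) = g j})
    fun j _ => hg j
  obtain ⟨n, hn, hnN⟩ := (((eventually_all_finite (finite_box k (off w ℓ))).2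
    fun a _ => hd a).and ((Nat.hyperfilter_le_atTop) (eventually_ge_atTop (off w ℓ)))).exists
  have hoff : ∀ i < ℓ, off w i + (w i).length ≤ off w ℓ := fun i hi => by
    rw [← off_succ]
    exact off_mono w hi
  have hblock : IsBlockSeqFin k n ℓ fun i => place (off w i) (w i) := by
    refine ⟨fun i hi => ⟨place_le (hw i hi), fun x hx => ?_, ?_⟩, fun i hi x hx x' hx' => ?_⟩
    · by_contra h
      have := place_ne_zero h
      have := hoff i hi
      omega
    · obtain ⟨x, hx, hxk⟩ := exists_place_eq (o := off w i) (hw i hi)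
      exact ⟨x, by have := hoff i hi; omega, hxk⟩
    · have h1 := place_ne_zero hx
      have h2 := place_ne_zero hx'
      rw [off_succ] at h2
      omega
  have hmono : ∀ j, 1 ≤ j → j ≤ k →
      ∀ a ∈ TSfin k j n ℓ fun i => place (off w i) (w i), c n a = g j := by
    rintro j hj1 hjk a ⟨haF, m, hm, js, fs, hfs, ⟨i₀, hi₀, hi₀j⟩, ha⟩
    have hsteps : ∀ i ≤ m, (fun x => fs i (min x k)) ∈ Steps k := fun i hi =>
      mem_steps (hfs i hi).2
    have ha' : a = place 0 (glue (m + 1) (fun i x => fs i (min x k)) w) := by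
      have hzero : ∀ i < m + 1, (fun i x => fs i (min x k)) i 0 = 0 := fun i hi =>
        (hsteps i (by omega)).1.zero
      rw [place_glue _ _ (fun i x => fs i (min x k)) _ hzero, ha]
      refine Finset.sum_congr rfl fun i hi => ?_
      have hi' := Finset.mem_range.1 hi
      funext x
      simp only [Function.comp, zero_add, min_eq_left (place_le (hw i (by omega)) x)]
    have hsup : ((Finset.range (m + 1)).sup fun i => fs i (min k k)) = j := by
      have htop : ∀ i ≤ m, fs i (min k k) = js i := fun i hi => by
        rw [min_self, apply_top (hfs i hi).2]
      refine le_antisymm (Finset.sup_le fun i hi => ?_) ?_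
      · have hi' := Nat.lt_succ_iff.1 (Finset.mem_range.1 hi)
        rw [htop i hi']
        exact (hfs i hi').1
      · have h := Finset.le_sup (f := fun i => fs i (min k k))
          (Finset.mem_range.2 (Nat.lt_succ_of_le hi₀))
        rwa [htop i₀ hi₀, hi₀j] at h
    have hda : d a = g j := by
      have h := hglue m hm _ hsteps
      rw [hsup, Set.mem_ofPred_eq, ← ha'] at h
      exact h
    have hbox : a ∈ {a : ℕ → ℕ | (∀ i, a i ≤ k) ∧ ∀ i, off w ℓ ≤ i → a i = 0} := by
      refine ⟨fun i => (haF.1 i).trans hjk, fun x hx => ?_⟩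
      rw [ha, Finset.sum_apply]
      refine Finset.sum_eq_zero fun i hi => ?_
      have hi' := Finset.mem_range.1 hi
      have h0 : place (off w i) (w i) x = 0 := by
        by_contra h
        have := place_ne_zero h
        have := hoff i (by omega)
        omega
      have hz := (hsteps i (by omega)).1.zero
      rw [Nat.zero_min] at hz
      change fs i (place (off w i) (w i) x) = 0
      rw [h0, hz]
    rw [← hda, ← hn a hbox, Nat.mod_eq_of_lt (hc n a ⟨j, hj1, hjk, haF⟩)]
  obtain ⟨j, hj1, hjk, a, ha, a', ha', hne⟩ := hbad n _ hblock
  exact hne ((hmono j hj1 hjk a ha).trans (hmono j hj1 hjk a' ha').symm)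
end

section
/- For every m, k ≥ 1 and every finite coloring of FIN_{≤k}^[m] (the union of FIN_j^[m] for j = 1,…,k), there exists an infinite block sequence (b_n) in FIN_k such that TS_j(b_n)^[m] is monochromatic for every j = 1,2,…,k. -/
/-- An element of `FIN_k^[m]`: a block sequence in `FIN k` of length `m`. -/
def IsBlockTuple (k m : ℕ) (t : Fin m → ℕ → ℕ) : Prop :=
  (∀ d, t d ∈ FIN k) ∧
    ∀ (d : ℕ) (h : d + 1 < m), SuppLT (t ⟨d, Nat.lt_of_succ_lt h⟩) (t ⟨d + 1, h⟩)

/-- The set `TS_j(b_n)^[m]`: all `(a_0,…,a_{m-1}) ∈ FIN_j^[m]` such that for some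
`0 = n_0 < n_1 < ⋯ < n_m`, `j_i ∈ {0,…,k}` and nondecreasing surjections
`f_i : {0,…,k} → {0,…,j_i}` one has `a_d = f_{n_d}∘b_{n_d} + ⋯ + f_{n_{d+1}-1}∘b_{n_{d+1}-1}`
and `max {j_{n_d},…,j_{n_{d+1}-1}} = j` for every `d < m`. -/
def TSm (k j m : ℕ) (b : ℕ → ℕ → ℕ) : Set (Fin m → ℕ → ℕ) :=
  {a | IsBlockTuple j m a ∧ ∃ (n : ℕ → ℕ) (js : ℕ → ℕ) (fs : ℕ → ℕ → ℕ),
    n 0 = 0 ∧ (∀ d, d < m → n d < n (d + 1)) ∧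
    (∀ i, i < n m → js i ≤ k ∧ IsTetrisFn k (js i) (fs i)) ∧
    ∀ d : Fin m,
      (∀ i, n d.val ≤ i → i < n (d.val + 1) → js i ≤ j) ∧
      (∃ i, n d.val ≤ i ∧ i < n (d.val + 1) ∧ js i = j) ∧
      a d = ∑ i ∈ Finset.Ico (n d.val) (n (d.val + 1)), (fs i) ∘ (b i)}

open Filter

/-! ### The semigroup of blocks -/

/-- Functions `ℕ → ℕ`, with the pointwise maximum as multiplication. On functions with disjoint
supports this agrees with the pointwise sum, but unlike the sum it is preserved by every
nondecreasing map of the values, with no condition on supports. -/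
def Blk : Type := ℕ → ℕ

namespace Blk

@[ext] theorem ext {a b : Blk} (h : ∀ i, a i = b i) : a = b := funext h

instance : CommMonoid Blk where
  mul a b := fun i => max (a i) (b i)
  one := fun _ => 0
  mul_assoc a b c := ext fun i => max_assoc (a i) (b i) (c i)
  mul_comm a b := ext fun i => max_comm (a i) (b i)
  one_mul a := ext fun i => Nat.zero_max (a i)
  mul_one a := ext fun i => Nat.max_zero (a i)

theorem mul_apply (a b : Blk) (i : ℕ) : (a * b) i = max (a i) (b i) := rfl

theorem one_apply (i : ℕ) : (1 : Blk) i = 0 := rfl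

/-- The tetris operation `b ↦ f ∘ b`. -/
def act (f : ℕ → ℕ) (b : Blk) : Blk := fun i => f (b i)

theorem act_mul {f : ℕ → ℕ} (hf : Monotone f) (a b : Blk) :
    act f (a * b) = act f a * act f b :=
  ext fun i => hf.map_max (a := a i) (b := b i)

end Blk

open Blk

/-- Membership in `FIN j`, as a predicate on `Blk`. -/
def IsFin (j : ℕ) (b : Blk) : Prop := b ∈ FIN j

theorem IsFin.mul {i j : ℕ} (hij : i ≤ j) {a b : Blk} (ha : IsFin j a) (hb : IsFin i b) :
    IsFin j (a * b) := by
  obtain ⟨ha1, ha2, n, hn⟩ := ha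
  obtain ⟨hb1, hb2, -⟩ := hb
  refine ⟨fun p => max_le (ha1 p) ((hb1 p).trans hij), (ha2.union hb2).subset ?_, n, ?_⟩
  · intro p hp
    by_contra hcon
    simp only [Set.mem_union, Set.mem_ofPred_eq, not_or, not_not] at hcon
    exact hp (by rw [mul_apply, hcon.1, hcon.2]; rfl)
  · rw [mul_apply, hn]
    exact max_eq_left ((hb1 n).trans hij)

/-! ### Tetris functions -/

/-- `f` is nondecreasing on all of `ℕ` and maps `{0,…,k}` onto `{0,…,j}`. Monotonicity beyond `k`
(not demanded by `IsTetrisFn`) makes `act f` multiplicative on all of `Blk`. -/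
structure Tet (k j : ℕ) (f : ℕ → ℕ) : Prop where
  mono : Monotone f
  top : f k = j
  surj : ∀ m, m ≤ j → ∃ i, i ≤ k ∧ f i = m

theorem Tet.zero {k j : ℕ} {f : ℕ → ℕ} (h : Tet k j f) : f 0 = 0 := by
  obtain ⟨i, -, hi⟩ := h.surj 0 (Nat.zero_le _)
  have := h.mono (Nat.zero_le i)
  omega

theorem Tet.of_zero {j : ℕ} {f : ℕ → ℕ} (h : Tet 0 j f) : j = 0 := by
  rw [← h.top, h.zero]

/-- Restricting to `{0,…,k}` either keeps the range or drops the top value only. -/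
theorem Tet.pred {k j : ℕ} {f : ℕ → ℕ} (h : Tet (k + 1) j f) :
    Tet k j f ∨ ∃ j', j = j' + 1 ∧ Tet k j' f := by
  have hle : f k ≤ j := h.top ▸ h.mono (Nat.le_succ k)
  have hs : ∀ m, m ≤ j → m ≠ j → ∃ i, i ≤ k ∧ f i = m := by
    intro m hm hne
    obtain ⟨i, hi, rfl⟩ := h.surj m hm
    refine ⟨i, ?_, rfl⟩
    rcases Nat.le_succ_iff.1 hi with h1 | h1
    · exact h1
    · exact absurd (h1 ▸ h.top) hne
  rcases hle.eq_or_lt with heq | hlt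
  · refine Or.inl ⟨h.mono, heq, fun m hm => ?_⟩
    by_cases hmj : m = j
    · exact ⟨k, le_rfl, heq.trans hmj.symm⟩
    · exact hs m hm hmj
  · obtain ⟨j', rfl⟩ : ∃ j', j = j' + 1 := ⟨j - 1, by omega⟩
    refine Or.inr ⟨j', rfl, h.mono, ?_, fun m hm => hs m (by omega) (by omega)⟩
    obtain ⟨i, hi, hi'⟩ := hs j' (by omega) (by omega)
    have := h.mono hi
    omega

/-! ### Coherent families of ultrafilters -/

attribute [local instance] Ultrafilter.semigroup

theorem Ultrafilter.map_act_mul {f : ℕ → ℕ} (hf : Monotone f) (U V : Ultrafilter Blk) :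
    (U * V).map (act f) = U.map (act f) * V.map (act f) := by
  refine Ultrafilter.coe_inj.mp (Filter.ext' fun p => ?_)
  rw [Ultrafilter.eventually_mul]
  simp only [Ultrafilter.coe_map, Filter.eventually_map]
  rw [Ultrafilter.eventually_mul]
  simp only [act_mul hf]

theorem Ultrafilter.continuous_map_act (f : ℕ → ℕ) :
    Continuous (fun U : Ultrafilter Blk => U.map (act f)) :=
  ultrafilterBasis_is_basis.continuous_iff.2 <| Set.forall_mem_range.mpr fun s ↦
    ultrafilter_isOpen_basic (act f ⁻¹' s)

/-- A family `v j` of ultrafilters on `FIN j`, each containing every tail `{b | n ≤ min Supp b}`,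
such that every tetris operation from level `k` to level `j` sends `v k` to `v j`. -/
structure Coh (v : ℕ → Ultrafilter Blk) : Prop where
  fin : ∀ j, ∀ᶠ b in (v j : Filter Blk), IsFin j b
  far : ∀ j n, ∀ᶠ b in (v j : Filter Blk), ∀ i < n, b i = 0
  map : ∀ k j f, Tet k j f → (v k).map (act f) = v j

theorem far_mul {U V : Ultrafilter Blk} {n : ℕ}
    (hU : ∀ᶠ b in (U : Filter Blk), ∀ i < n, b i = 0)
    (hV : ∀ᶠ b in (V : Filter Blk), ∀ i < n, b i = 0) :
    ∀ᶠ b in (↑(U * V) : Filter Blk), ∀ i < n, b i = 0 := by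
  rw [Ultrafilter.eventually_mul]
  filter_upwards [hU] with a ha
  filter_upwards [hV] with b hb i hi
  rw [mul_apply, ha i hi, hb i hi]; rfl

theorem fin_mul {U V : Ultrafilter Blk} {i j : ℕ} (hij : i ≤ j)
    (hU : ∀ᶠ b in (U : Filter Blk), IsFin j b)
    (hV : ∀ᶠ b in (V : Filter Blk), IsFin i b) :
    ∀ᶠ b in (↑(U * V) : Filter Blk), IsFin j b := by
  rw [Ultrafilter.eventually_mul]
  filter_upwards [hU] with a ha
  filter_upwards [hV] with b hb
  exact IsFin.mul hij ha hb

theorem fin_mul' {U V : Ultrafilter Blk} {i j : ℕ} (hij : i ≤ j)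
    (hU : ∀ᶠ b in (U : Filter Blk), IsFin i b)
    (hV : ∀ᶠ b in (V : Filter Blk), IsFin j b) :
    ∀ᶠ b in (↑(U * V) : Filter Blk), IsFin j b := by
  rw [Ultrafilter.eventually_mul]
  filter_upwards [hU] with a ha
  filter_upwards [hV] with b hb
  rw [mul_comm]
  exact IsFin.mul hij hb ha

theorem Coh.mul {v w : ℕ → Ultrafilter Blk} (hv : Coh v) (hw : Coh w) : Coh (v * w) where
  fin j := fin_mul le_rfl (hv.fin j) (hw.fin j)
  far j n := far_mul (hv.far j n) (hw.far j n)
  map k j f hf := by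
    rw [Pi.mul_apply, Pi.mul_apply, Ultrafilter.map_act_mul hf.mono, hv.map k j f hf,
      hw.map k j f hf]

theorem isClosed_eventually (j : ℕ) (p : Blk → Prop) :
    IsClosed {v : ℕ → Ultrafilter Blk | ∀ᶠ b in (v j : Filter Blk), p b} :=
  IsClosed.preimage (f := fun v : ℕ → Ultrafilter Blk => v j) (continuous_apply j)
    (ultrafilter_isClosed_basic {b | p b})

theorem isClosed_coh : IsClosed {v | Coh v} := by
  have : {v | Coh v} =
      (⋂ j, {v | ∀ᶠ b in (v j : Filter Blk), IsFin j b}) ∩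
      ((⋂ j, ⋂ n, {v | ∀ᶠ b in (v j : Filter Blk), ∀ i < n, b i = 0}) ∩
      (⋂ k, ⋂ j, ⋂ f, ⋂ (_ : Tet k j f), {v | (v k).map (act f) = v j})) := by
    ext v
    simp only [Set.mem_inter_iff, Set.mem_iInter, Set.mem_ofPred_eq]
    exact ⟨fun h => ⟨h.fin, h.far, h.map⟩, fun h => ⟨h.1, h.2.1, h.2.2⟩⟩
  rw [this]
  refine IsClosed.inter ?_ (IsClosed.inter ?_ ?_)
  · exact isClosed_iInter fun j => isClosed_eventually j _
  · exact isClosed_iInter fun j => isClosed_iInter fun n => isClosed_eventually j _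
  · exact isClosed_iInter fun k => isClosed_iInter fun j => isClosed_iInter fun f =>
      isClosed_iInter fun _ => isClosed_eq
        ((Ultrafilter.continuous_map_act f).comp (continuous_apply k)) (continuous_apply j)

/-- The functions `j · 1_{n}`, with `n` running along a nonprincipal ultrafilter, form a coherent
family: a tetris operation from level `k` to level `j` sends `k · 1_{n}` to `j · 1_{n}`. -/
theorem exists_coh : ∃ v, Coh v := by
  classical
  let s : ℕ → ℕ → Blk := fun j n i => if i = n then j else 0
  refine ⟨fun j => (hyperfilter ℕ).map (s j), ?_, ?_, ?_⟩
  · intro j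
    refine Filter.Eventually.of_forall (f := (hyperfilter ℕ : Filter ℕ)) fun n => ?_
    refine ⟨fun p => ?_, (Set.finite_singleton n).subset ?_, n, if_pos rfl⟩
    · show (if p = n then j else 0) ≤ j
      split_ifs <;> omega
    · intro p hp
      by_contra hne
      exact hp (if_neg hne)
  · intro j N
    have h : ∀ᶠ n in (hyperfilter ℕ : Filter ℕ), N ≤ n := by
      have : (hyperfilter ℕ : Filter ℕ) ≤ atTop := Nat.hyperfilter_le_atTop
      exact this (eventually_ge_atTop N)
    show ∀ᶠ n in (hyperfilter ℕ : Filter ℕ), ∀ i < N, s j n i = 0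
    filter_upwards [h] with n hn i hi
    exact if_neg (by omega)
  · intro k j f hf
    rw [Ultrafilter.map_map]
    congr 1
    funext n
    ext i
    show f (if i = n then k else 0) = if i = n then j else 0
    split_ifs
    · exact hf.top
    · exact hf.zero

/-- Ellis–Numakura in the product semigroup of families of ultrafilters. -/
theorem exists_idem_mem (S : Set (ℕ → Ultrafilter Blk)) (hne : S.Nonempty) (hcl : IsClosed S)
    (hmul : ∀ v ∈ S, ∀ w ∈ S, v * w ∈ S) : ∃ v ∈ S, ∀ j, v j * v j = v j := by
  obtain ⟨v, hv, hvv⟩ := exists_idempotent_in_compact_subsemigroup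
    (M := ℕ → Ultrafilter Blk)
    (fun r => continuous_pi fun j =>
      (Ultrafilter.continuous_mul_left (r j)).comp (continuous_apply j))
    S hne hcl.isCompact hmul
  exact ⟨v, hv, fun j => congrFun hvv j⟩

/-- The family `v j * v (j - 1) * ⋯ * v 0`. -/
def descProd (v : ℕ → Ultrafilter Blk) : ℕ → Ultrafilter Blk
  | 0 => v 0
  | j + 1 => v (j + 1) * descProd v j

/-- The family `v 0 * v 1 * ⋯ * v j`. -/
def ascProd (v : ℕ → Ultrafilter Blk) : ℕ → Ultrafilter Blk
  | 0 => v 0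
  | j + 1 => ascProd v j * v (j + 1)

/-- A tetris operation onto level `j` turns `v k * ⋯ * v 0` into a product of the factors
`v j, …, v 0` in this order, each occurring at least once; idempotence removes the repetitions. -/
theorem Coh.descProd {v : ℕ → Ultrafilter Blk} (hv : Coh v) (hi : ∀ j, v j * v j = v j) :
    Coh (descProd v) where
  fin j := by
    induction j with
    | zero => exact hv.fin 0
    | succ j ih => exact fin_mul (Nat.le_succ j) (hv.fin _) ih
  far j n := by
    induction j with
    | zero => exact hv.far 0 n
    | succ j ih => exact far_mul (hv.far _ n) ih
  map k := by
    induction k with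
    | zero =>
      intro j f hf
      obtain rfl := hf.of_zero
      exact hv.map 0 0 f hf
    | succ k ih =>
      intro j f hf
      rw [_root_.descProd, Ultrafilter.map_act_mul hf.mono, hv.map _ j f hf]
      rcases hf.pred with h | ⟨j', rfl, h⟩
      · rw [ih j f h]
        cases j with
        | zero => exact hi 0
        | succ j => rw [_root_.descProd, ← mul_assoc, hi]
      · rw [ih j' f h]; rfl

theorem Coh.ascProd {v : ℕ → Ultrafilter Blk} (hv : Coh v) (hi : ∀ j, v j * v j = v j) :
    Coh (ascProd v) where
  fin j := by
    induction j with
    | zero => exact hv.fin 0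
    | succ j ih => exact fin_mul' (Nat.le_succ j) ih (hv.fin _)
  far j n := by
    induction j with
    | zero => exact hv.far 0 n
    | succ j ih => exact far_mul ih (hv.far _ n)
  map k := by
    induction k with
    | zero =>
      intro j f hf
      obtain rfl := hf.of_zero
      exact hv.map 0 0 f hf
    | succ k ih =>
      intro j f hf
      rw [_root_.ascProd, Ultrafilter.map_act_mul hf.mono, hv.map _ j f hf]
      rcases hf.pred with h | ⟨j', rfl, h⟩
      · rw [ih j f h]
        cases j with
        | zero => exact hi 0
        | succ j => rw [_root_.ascProd, mul_assoc, hi]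
      · rw [ih j' f h]; rfl

/-- By induction on `n`, the relations `u i * u j = u (max i j)` are obtained for `i, j ≤ n`. In the
step, `u` is kept on the levels `≤ n`. A descending product gives a family absorbing `u i` (`i ≤ n`)
on the right; such families form a closed semigroup, and the ascending product of an idempotent `y`
in it has `u n * y (n + 1)` at level `n + 1`, which absorbs `u i` on both sides. -/
theorem exists_absorbing (n : ℕ) :
    ∃ u, Coh u ∧ ∀ i ≤ n, ∀ j ≤ n, u i * u j = u (max i j) := by
  induction n with
  | zero =>
    obtain ⟨v, hv, hvi⟩ := exists_idem_mem {v | Coh v} exists_coh isClosed_coh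
      fun v hv w hw => Coh.mul hv hw
    refine ⟨v, hv, fun i hi j hj => ?_⟩
    obtain rfl := Nat.le_zero.1 hi
    obtain rfl := Nat.le_zero.1 hj
    exact hvi 0
  | succ n ih =>
    obtain ⟨u, hu, hab⟩ := ih
    have hclZ : IsClosed {v : ℕ → Ultrafilter Blk | ∀ i ≤ n, v i = u i} := by
      simp only [Set.ofPred_forall]
      exact isClosed_iInter fun i => isClosed_iInter fun _ =>
        isClosed_eq (continuous_apply i) continuous_const
    have hid : ∀ i ≤ n, u i * u i = u i := fun i hi => by rw [hab i hi i hi, max_self]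
    obtain ⟨w, ⟨hw, hwu⟩, hwi⟩ := exists_idem_mem ({v | Coh v} ∩ {v | ∀ i ≤ n, v i = u i})
      ⟨u, hu, fun _ _ => rfl⟩ (isClosed_coh.inter hclZ) fun v hv w hw =>
        ⟨Coh.mul hv.1 hw.1, fun i hi => by
          rw [Pi.mul_apply, hv.2 i hi, hw.2 i hi, hid i hi]⟩
    have hdn : ∀ i ≤ n, descProd w i = u i := by
      intro i hi
      induction i with
      | zero => exact hwu 0 hi
      | succ i ihi =>
        rw [descProd, ihi (by omega), hwu _ hi, hab _ hi _ (by omega), max_eq_left (by omega)]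
    have hdn' : ∀ i ≤ n, ∀ j, i ≤ j → descProd w j * u i = descProd w j := by
      intro i hi j
      induction j with
      | zero =>
        intro hij
        rw [hdn 0 (by omega), hab 0 (by omega) i hi, max_eq_left hij]
      | succ j ihj =>
        intro hij
        by_cases hj : j + 1 ≤ n
        · rw [hdn _ hj, hab _ hj i hi, max_eq_left hij]
        · rw [descProd, mul_assoc, ihj (by omega)]
    have hclY : IsClosed {v : ℕ → Ultrafilter Blk | ∀ i ≤ n, ∀ j, i ≤ j → v j * u i = v j} := by
      simp only [Set.ofPred_forall]
      exact isClosed_iInter fun i => isClosed_iInter fun _ => isClosed_iInter fun j =>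
        isClosed_iInter fun _ => isClosed_eq
          ((Ultrafilter.continuous_mul_left (u i)).comp (continuous_apply j)) (continuous_apply j)
    obtain ⟨y, ⟨⟨hy, hyu⟩, hya⟩, hyi⟩ := exists_idem_mem
      (({v | Coh v} ∩ {v | ∀ i ≤ n, v i = u i}) ∩
        {v | ∀ i ≤ n, ∀ j, i ≤ j → v j * u i = v j})
      ⟨descProd w, ⟨hw.descProd hwi, hdn⟩, hdn'⟩ ((isClosed_coh.inter hclZ).inter hclY) fun v hv w hw =>
        ⟨⟨Coh.mul hv.1.1 hw.1.1, fun i hi => by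
          rw [Pi.mul_apply, hv.1.2 i hi, hw.1.2 i hi, hid i hi]⟩, fun i hi j hij => by
          rw [Pi.mul_apply, mul_assoc, hw.2 i hi j hij]⟩
    have hup : ∀ i ≤ n, ascProd y i = u i := by
      intro i hi
      induction i with
      | zero => exact hyu 0 hi
      | succ i ihi =>
        rw [ascProd, ihi (by omega), hyu _ hi, hab _ (by omega) _ hi, max_eq_right (by omega)]
    have htop : ascProd y (n + 1) = u n * y (n + 1) := by rw [ascProd, hup n le_rfl]
    refine ⟨ascProd y, hy.ascProd hyi, fun i hi j hj => ?_⟩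
    rcases Nat.le_succ_iff.1 hi with hi | rfl <;> rcases Nat.le_succ_iff.1 hj with hj | rfl
    · rw [hup i hi, hup j hj, hup _ (max_le hi hj), hab i hi j hj]
    · rw [max_eq_right (by omega), htop, hup i hi, ← mul_assoc, hab i hi n le_rfl,
        max_eq_right hi]
    · rw [max_eq_left (by omega), htop, hup j hj, mul_assoc, hya j hj _ (by omega)]
    · rw [max_self, htop, mul_assoc, ← mul_assoc (y (n + 1)), hya n le_rfl _ (by omega), hyi]

/-! ### Colors and configurations -/

/-- `FIN 0` consists of the zero function only, so `u 0` is the principal ultrafilter at `1`. -/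
theorem Coh.eventually_zero {u : ℕ → Ultrafilter Blk} (hu : Coh u) {p : Blk → Prop} :
    (∀ᶠ z in (u 0 : Filter Blk), p z) ↔ p 1 := by
  have h1 : ∀ᶠ z in (u 0 : Filter Blk), z = 1 := by
    filter_upwards [hu.fin 0] with z hz
    exact Blk.ext fun i => Nat.le_zero.1 (hz.1 i)
  constructor
  · intro h
    obtain ⟨z, hz, rfl⟩ := (h.and h1).exists
    exact hz
  · intro h
    filter_upwards [h1] with z hz
    rwa [hz]

/-- `P` holds for `U`-almost all extensions of the list `s` by `r` further blocks, the
almost-all quantifiers being iterated from left to right. -/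
def Most (U : Ultrafilter Blk) (P : List Blk → Prop) : ℕ → List Blk → Prop
  | 0, s => P s
  | r + 1, s => ∀ᶠ a in (U : Filter Blk), Most U P r (s ++ [a])

theorem exists_color (U : Ultrafilter Blk) (R : ℕ) (c : List Blk → ℕ) (hc : ∀ s, c s ≤ R)
    (r : ℕ) : ∀ s, ∃ i ∈ Set.Iic R, Most U (fun t => c t = i) r s := by
  induction r with
  | zero => exact fun s => ⟨c s, hc s, rfl⟩
  | succ r ih =>
    intro s
    exact (Ultrafilter.eventually_exists_mem_iff (Set.finite_Iic R)).1
      (Filter.Eventually.of_forall fun a => ih (s ++ [a]))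

/-- The state of a tuple under construction: the completed entries `done`, the partial sum `cur` of
the current entry, and the largest level `lvl` used in that partial sum so far. -/
structure Config where
  done : List Blk
  cur : Blk
  lvl : ℕ

/-- Append the summand `f ∘ b`, of level `f k`, to the current entry. -/
def Config.add (p : Config) (f : ℕ → ℕ) (k : ℕ) (b : Blk) : Config :=
  ⟨p.done, p.cur * act f b, max p.lvl (f k)⟩

/-- Complete the current entry and start a new one. -/
def Config.close (p : Config) : Config := ⟨p.done ++ [p.cur], 1, 0⟩

/-- The nondecreasing surjections `{0,…,k} → {0,…,i}` with `i ≤ j`, extended to `ℕ` by a constant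
so that there are only finitely many of them. -/
def tetFns (k j : ℕ) : Set (ℕ → ℕ) :=
  {f | Tet k (f k) f ∧ f k ≤ j ∧ ∀ i, f i = f (min i k)}

theorem finite_tetFns (k j : ℕ) : (tetFns k j).Finite := by
  refine (Set.finite_range fun (g : Fin (k + 1) → Fin (j + 1)) (i : ℕ) =>
    (g ⟨min i k, Nat.lt_succ_of_le (min_le_right i k)⟩ : ℕ)).subset ?_
  rintro f ⟨hf, hj, hmin⟩
  refine ⟨fun i => ⟨f (min i k), Nat.lt_succ_of_le ((hf.mono (min_le_right _ k)).trans hj)⟩, ?_⟩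
  funext i
  simp only [min_assoc, min_self]
  exact (hmin i).symm

/-- All configurations arising from the history `h` (most recent block first): every block is
appended to the current entry through some tetris function, after which the entry may be completed
if its level is `j`. -/
def configs (k j : ℕ) : List Blk → Set Config
  | [] => {⟨[], 1, 0⟩}
  | b :: h =>
    let A := Set.image2 (fun p f => p.add f k b) (configs k j h) (tetFns k j)
    A ∪ Config.close '' {p | p ∈ A ∧ p.lvl = j}

theorem finite_configs (k j : ℕ) (h : List Blk) : (configs k j h).Finite := by
  induction h with
  | nil => exact Set.finite_singleton _
  | cons b h ih =>
    have hA := Set.Finite.image2 (fun (p : Config) f => p.add f k b) ih (finite_tetFns k j)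
    exact hA.union ((hA.subset fun p hp => hp.1).image _)

/-- The property of a configuration that is maintained: if adding a generic summand of level `l`
brings the current entry to level `j`, then the resulting tuple, once completed by generic entries of
level `j`, satisfies `P`. For `l = 0` the generic summand is zero. -/
def Config.Inv (u : ℕ → Ultrafilter Blk) (m j : ℕ) (P : List Blk → Prop) (p : Config) : Prop :=
  ∀ r, p.done.length + r + 1 = m → ∀ l ≤ j, max p.lvl l = j →
    ∀ᶠ z in (u l : Filter Blk), Most (u j) P r (p.done ++ [p.cur * z])

/-- The hypothesis on `p` is applied with `l = 0`. -/
theorem Config.Inv.close {u : ℕ → Ultrafilter Blk} (hu : Coh u) {m j : ℕ} {P : List Blk → Prop}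
    {p : Config} (hp : p.Inv u m j P) (hj : p.lvl = j) : p.close.Inv u m j P := by
  intro r hr l hl hmax
  obtain rfl : l = j := by simpa [Config.close] using hmax
  have h := hp (r + 1) (by simp [Config.close] at hr; omega) 0 (Nat.zero_le _) (by simp [hj])
  rw [hu.eventually_zero, mul_one] at h
  simp only [Config.close, one_mul]
  exact h

/-- A generic block preserves the invariant: a summand of level `f k` followed by a generic one of
level `l` is a generic summand of level `max (f k) l`, as `u (f k) * u l = u (max (f k) l)`. -/
theorem Config.Inv.add {u : ℕ → Ultrafilter Blk} (hu : Coh u) {k m j : ℕ} (hjk : j ≤ k)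
    (hab : ∀ i ≤ k, ∀ j ≤ k, u i * u j = u (max i j)) {P : List Blk → Prop}
    {p : Config} (hp : p.Inv u m j P) {f : ℕ → ℕ} (hf : f ∈ tetFns k j) :
    ∀ᶠ b in (u k : Filter Blk), (p.add f k b).Inv u m j P := by
  obtain ⟨hT, hfj, -⟩ := hf
  by_cases hm : p.done.length + 1 ≤ m
  swap
  · refine Filter.Eventually.of_forall fun b r hr => ?_
    simp only [Config.add] at hr
    omega
  obtain ⟨r, hr⟩ : ∃ r, p.done.length + r + 1 = m := ⟨m - p.done.length - 1, by omega⟩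
  have key : ∀ l ∈ Set.Iic j, ∀ᶠ b in (u k : Filter Blk), max (max p.lvl (f k)) l = j →
      ∀ᶠ z in (u l : Filter Blk), Most (u j) P r (p.done ++ [p.cur * act f b * z]) := by
    intro l hl
    by_cases hmax : max (max p.lvl (f k)) l = j
    swap
    · exact Filter.Eventually.of_forall fun b h => absurd h hmax
    have h := hp r hr (max (f k) l) (max_le hfj hl) (by rw [← max_assoc, hmax])
    rw [← hab (f k) (hfj.trans hjk) l (le_trans hl hjk), Ultrafilter.eventually_mul,
      ← hu.map k (f k) f hT, Ultrafilter.coe_map, Filter.eventually_map] at h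
    filter_upwards [h] with b hb _
    simpa only [mul_assoc] using hb
  filter_upwards [(Filter.eventually_all_finite (Set.finite_Iic j)).2 key] with b hb r' hr' l hl hmax
  obtain rfl : r' = r := by
    simp only [Config.add] at hr'
    omega
  exact hb l hl hmax

/-! ### The block sequence -/

/-- A history of blocks of `FIN k` all of whose configurations satisfy the invariant. -/
def GoodHist (u : ℕ → Ultrafilter Blk) (m k : ℕ) (P : ℕ → List Blk → Prop) (h : List Blk) : Prop :=
  (∀ b ∈ h, IsFin k b) ∧ ∀ j ≤ k, ∀ p ∈ configs k j h, p.Inv u m j (P j)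

theorem GoodHist.extend {u : ℕ → Ultrafilter Blk} (hu : Coh u) {m k : ℕ}
    (hab : ∀ i ≤ k, ∀ j ≤ k, u i * u j = u (max i j)) {P : ℕ → List Blk → Prop} {h : List Blk}
    (hh : GoodHist u m k P h) :
    ∃ b : Blk, GoodHist u m k P (b :: h) ∧ ∀ b' ∈ h, SuppLT b' b := by
  have h1 : ∀ j ∈ Set.Iic k, ∀ p ∈ configs k j h, ∀ f ∈ tetFns k j,
      ∀ᶠ b in (u k : Filter Blk), (p.add f k b).Inv u m j (P j) :=
    fun j hj p hp f hf => (hh.2 j hj p hp).add hu hj hab hf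
  have h2 : ∀ᶠ b in (u k : Filter Blk), ∀ j ∈ Set.Iic k, ∀ p ∈ configs k j h, ∀ f ∈ tetFns k j,
      (p.add f k b).Inv u m j (P j) := by
    simp only [Filter.eventually_all_finite (Set.finite_Iic k),
      Filter.eventually_all_finite (finite_configs k _ h),
      Filter.eventually_all_finite (finite_tetFns k _)]
    exact h1
  have h3 : ∀ᶠ (b : Blk) in (u k : Filter Blk), ∀ b' ∈ {b | b ∈ h}, SuppLT b' b := by
    refine (Filter.eventually_all_finite (p := fun b' b : Blk => SuppLT b' b)
      (List.finite_toSet h)).2 ?_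
    intro b' hb'
    obtain ⟨N, hN⟩ := (hh.1 b' hb').2.1.bddAbove
    filter_upwards [hu.far k (N + 1)] with b hb i hi i' hi'
    by_contra hlt
    exact hi' (hb i' (by have := hN hi; omega))
  obtain ⟨b, hb2, hb3, hbF⟩ := (h2.and (h3.and (hu.fin k))).exists
  refine ⟨b, ⟨?_, fun j hj p hp => ?_⟩, hb3⟩
  · intro b' hb'
    rcases List.mem_cons.1 hb' with rfl | hb'
    · exact hbF
    · exact hh.1 b' hb'
  · rcases hp with ⟨q, hq, f, hf, rfl⟩ | ⟨_, ⟨⟨q, hq, f, hf, rfl⟩, hl⟩, rfl⟩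
    · exact hb2 j hj q hq f hf
    · exact (hb2 j hj q hq f hf).close hu hl

/-- The list `[b (n-1), …, b 0]`. -/
def hist (b : ℕ → Blk) : ℕ → List Blk
  | 0 => []
  | n + 1 => b n :: hist b n

theorem mem_hist (b : ℕ → Blk) {i n : ℕ} (h : i < n) : b i ∈ hist b n := by
  induction n with
  | zero => omega
  | succ n ih =>
    rcases Nat.lt_succ_iff_lt_or_eq.1 h with h | rfl
    · exact List.mem_cons_of_mem _ (ih h)
    · exact List.mem_cons_self

theorem exists_seq {u : ℕ → Ultrafilter Blk} (hu : Coh u) {m k : ℕ}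
    (hab : ∀ i ≤ k, ∀ j ≤ k, u i * u j = u (max i j)) {P : ℕ → List Blk → Prop}
    (h0 : GoodHist u m k P []) :
    ∃ b : ℕ → Blk, (∀ n, GoodHist u m k P (hist b n)) ∧
      ∀ i n, i < n → SuppLT (b i) (b n) := by
  choose! nx hnx hlt using fun h (hh : GoodHist u m k P h) => hh.extend hu hab
  let H : ℕ → List Blk := fun n => Nat.rec [] (fun _ h => nx h :: h) n
  have hH : ∀ n, hist (fun n => nx (H n)) n = H n := by
    intro n
    induction n with
    | zero => rfl
    | succ n ih => rw [hist, ih]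
  have hG : ∀ n, GoodHist u m k P (H n) := by
    intro n
    induction n with
    | zero => exact h0
    | succ n ih => exact hnx _ ih
  refine ⟨fun n => nx (H n), fun n => by rw [hH]; exact hG n, fun i n hin => ?_⟩
  refine hlt (H n) (hG n) _ ?_
  rw [← hH n]
  exact mem_hist (fun n => nx (H n)) hin

/-! ### Elements of `TSm` as configurations -/

theorem exists_tetFn {k j i : ℕ} {f : ℕ → ℕ} (hf : IsTetrisFn k i f) (hij : i ≤ j) :
    ∃ g ∈ tetFns k j, g k = i ∧ ∀ b : Blk, IsFin k b → f ∘ b = act g b := by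
  obtain ⟨hmono, hle, hsurj⟩ := hf
  have htop : f k = i := by
    obtain ⟨p, hp, hpi⟩ := hsurj i le_rfl
    exact le_antisymm (hle k le_rfl) (hpi ▸ hmono k p hp le_rfl)
  refine ⟨fun p => f (min p k), ⟨⟨?_, rfl, ?_⟩, ?_, ?_⟩, ?_, ?_⟩
  · exact fun p q hpq => hmono _ _ (min_le_min_right k hpq) (min_le_right _ _)
  · intro q hq
    simp only [min_self, htop] at hq
    obtain ⟨p, hp, rfl⟩ := hsurj q hq
    exact ⟨p, hp, by simp only [min_eq_left hp]⟩
  · simpa only [min_self, htop] using hij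
  · intro p
    simp only [min_assoc, min_self]
  · simpa only [min_self] using htop
  · intro b hb
    funext p
    show f (b p) = f (min (b p) k)
    rw [min_eq_left (hb.1 p)]

/-- The pointwise sum `∑ fs i ∘ b i` over `s ≤ i < t`, as a block. -/
def blockSum (fs : ℕ → ℕ → ℕ) (b : ℕ → Blk) (s t : ℕ) : Blk :=
  (∑ i ∈ Finset.Ico s t, fs i ∘ b i : ℕ → ℕ)

/-- Supports are disjoint, so adding the last summand is the same as taking a maximum. -/
theorem sum_mul_act {b : ℕ → Blk} (hlt : ∀ i n, i < n → SuppLT (b i) (b n))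
    {gs : ℕ → ℕ → ℕ} {s t : ℕ} (hst : s ≤ t) (h0 : ∀ i, i ≤ t → gs i 0 = 0) :
    blockSum gs b s (t + 1) = blockSum gs b s t * act (gs t) (b t) := by
  ext p
  rw [mul_apply, blockSum, blockSum, Finset.sum_Ico_succ_top hst]
  simp only [Pi.add_apply, Finset.sum_apply, Function.comp]
  show _ + gs t (b t p) = max _ (gs t (b t p))
  by_cases hp : b t p = 0
  · rw [hp, h0 t le_rfl]; simp
  · have : ∑ i ∈ Finset.Ico s t, gs i (b i p) = 0 := by
      refine Finset.sum_eq_zero fun i hi => ?_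
      have hi := (Finset.mem_Ico.1 hi).2
      have : b i p = 0 := by
        by_contra hne
        exact absurd (hlt i t hi p hne p hp) (lt_irrefl p)
      rw [this, h0 i hi.le]
    rw [this]; simp

/-- Every `a ∈ TS_j(b)^[m]` is read off from the configurations of the histories of `b`: the entries
below `d` are completed at time `n d`, and at time `n m` the invariant says that `a` satisfies
`P j`. -/
theorem color_of_TSm {u : ℕ → Ultrafilter Blk} (hu : Coh u) {m k j : ℕ} (hj : j ≤ k)
    {P : ℕ → List Blk → Prop} {b : ℕ → Blk} (hm : 1 ≤ m)
    (hG : ∀ n, GoodHist u m k P (hist b n)) (hlt : ∀ i n, i < n → SuppLT (b i) (b n))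
    {a : Fin m → Blk} (ha : a ∈ TSm k j m b) : P j (List.ofFn a) := by
  obtain ⟨-, n, js, fs, hn0, hnlt, hf, hd⟩ := ha
  have hbF : ∀ i, IsFin k (b i) := fun i => (hG (i + 1)).1 _ (mem_hist b (Nat.lt_succ_self i))
  have hmono : ∀ d ≤ m, n d ≤ n m := by
    intro d hdm
    induction hdm using Nat.decreasingInduction with
    | self => exact le_rfl
    | of_succ d hd ih => exact (hnlt d hd).le.trans ih
  have hz : ∀ i < n m, fs i 0 = 0 := by
    intro i hi
    obtain ⟨p, hp, hp0⟩ := (hf i hi).2.2.2 0 (Nat.zero_le _)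
    have := (hf i hi).2.1 p 0 (Nat.zero_le _) hp
    omega
  let S : ℕ → ℕ → Blk := blockSum fs b
  let pre : ℕ → List Blk := fun d => (List.ofFn a).take d
  let J : ℕ → ℕ → ℕ := fun s t => (Finset.Ico s t).sup js
  have hadd : ∀ d < m, ∀ t, n d ≤ t → t < n (d + 1) →
      (⟨pre d, S (n d) t, J (n d) t⟩ : Config) ∈ configs k j (hist b t) →
      (⟨pre d, S (n d) (t + 1), J (n d) (t + 1)⟩ : Config) ∈
        Set.image2 (fun p f => p.add f k (b t)) (configs k j (hist b t)) (tetFns k j) := by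
    intro d hdm t hdt htd hmem
    have htm : t < n m := htd.trans_le (hmono _ hdm)
    obtain ⟨g, hg, hgk, hgb⟩ := exists_tetFn (hf t htm).2 ((hd ⟨d, hdm⟩).1 t hdt htd)
    refine ⟨_, hmem, g, hg, ?_⟩
    have hS : S (n d) (t + 1) = S (n d) t * act (fs t) (b t) :=
      sum_mul_act hlt hdt fun i hi => hz i (by omega)
    have hJ : J (n d) (t + 1) = max (J (n d) t) (js t) := by
      simp only [J]
      rw [← Finset.insert_Ico_right_eq_Ico_add_one hdt, Finset.sup_insert, max_comm]
    have hact : act (fs t) (b t) = act g (b t) := hgb (b t) (hbF t)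
    rw [hS, hJ, hact, ← hgk]
    rfl
  have hopen : ∀ d < m, (⟨pre d, 1, 0⟩ : Config) ∈ configs k j (hist b (n d)) →
      ∀ t, n d ≤ t → t ≤ n (d + 1) →
      (⟨pre d, S (n d) t, J (n d) t⟩ : Config) ∈ configs k j (hist b t) := by
    intro d hdm h0 t hdt
    induction t, hdt using Nat.le_induction with
    | base =>
      intro _
      have h1 : S (n d) (n d) = 1 := by
        simp only [S, blockSum, Finset.Ico_self, Finset.sum_empty]; rfl
      have h2 : J (n d) (n d) = 0 := by simp [J]
      rw [h1, h2]
      exact h0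
    | succ t hdt ih => exact fun htd => Or.inl (hadd d hdm t hdt htd (ih (by omega)))
  have hblock : ∀ d (hdm : d < m), S (n d) (n (d + 1)) = a ⟨d, hdm⟩ ∧ J (n d) (n (d + 1)) = j := by
    intro d hdm
    obtain ⟨h1, ⟨i, hi1, hi2, hi3⟩, h3⟩ := hd ⟨d, hdm⟩
    refine ⟨h3.symm, le_antisymm (Finset.sup_le fun i hi => ?_) ?_⟩
    · exact h1 i (Finset.mem_Ico.1 hi).1 (Finset.mem_Ico.1 hi).2
    · rw [← hi3]
      exact Finset.le_sup (f := js) (Finset.mem_Ico.2 ⟨hi1, hi2⟩)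
  have hpre : ∀ d (hdm : d < m), pre (d + 1) = pre d ++ [a ⟨d, hdm⟩] := by
    intro d hdm
    simp only [pre]
    rw [List.take_add_one]
    simp [hdm]
  have hstart : ∀ d < m, (⟨pre d, 1, 0⟩ : Config) ∈ configs k j (hist b (n d)) := by
    intro d
    induction d with
    | zero =>
      intro _
      rw [hn0]
      rfl
    | succ d ih =>
      intro hdm
      have hdm' : d < m := by omega
      have hnd := hnlt d hdm'
      obtain ⟨t, ht⟩ : ∃ t, n (d + 1) = t + 1 := ⟨n (d + 1) - 1, by omega⟩
      have h1 := hadd d hdm' t (by omega) (by omega)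
        (hopen d hdm' (ih hdm') t (by omega) (by omega))
      obtain ⟨hS, hJ⟩ := hblock d hdm'
      rw [← ht] at h1
      rw [ht]
      refine Or.inr ⟨_, ⟨h1, hJ⟩, ?_⟩
      rw [hpre d hdm', ← hS]
      rfl
  obtain ⟨d, rfl⟩ : ∃ d, m = d + 1 := ⟨m - 1, by omega⟩
  have hd' : d < d + 1 := Nat.lt_succ_self d
  have hfin := (hG (n (d + 1))).2 j hj _
    (hopen d hd' (hstart d hd') (n (d + 1)) (hnlt d hd').le le_rfl)
    0 (by simp [pre]) 0 (Nat.zero_le _) (by simp [(hblock d hd').2])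
  rw [hu.eventually_zero, mul_one] at hfin
  have hall : List.ofFn a = pre (d + 1) := by simp [pre]
  rw [hall, hpre d hd', ← (hblock d hd').1]
  exact hfin

theorem getD_ofFn {m : ℕ} (a : Fin m → Blk) (d : Fin m) : (List.ofFn a).getD d 1 = a d := by
  simp [List.getD]

/-- The multidimensional Gowers theorem for generalized tetris operations: for every
finite coloring of `FIN_{≤k}^[m]` there is an infinite block sequence in `FIN k` such that
`TS_j(b_n)^[m]` is monochromatic for every `j = 1,…,k`. -/
theorem gowers_generalized_tetris_multidim (m k : ℕ) (hm : 1 ≤ m) (hk : 1 ≤ k)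
    (r : ℕ) (c : (Fin m → ℕ → ℕ) → ℕ)
    (hc : ∀ t : Fin m → ℕ → ℕ, (∃ j, 1 ≤ j ∧ j ≤ k ∧ IsBlockTuple j m t) → c t < r) :
    ∃ b : ℕ → ℕ → ℕ, IsBlockSeq k b ∧
      ∀ j, 1 ≤ j → j ≤ k → ∀ a ∈ TSm k j m b, ∀ a' ∈ TSm k j m b, c a = c a' := by
  classical
  obtain ⟨u, hu, hab⟩ := exists_absorbing k
  -- `c` is bounded on block tuples only; truncating it at `r` bounds it everywhere and changes
  -- nothing on `TSm`.
  let c' : List Blk → ℕ := fun s => min (c fun d => s.getD d 1) r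
  choose col _ hcol using fun j => exists_color (u j) r c' (fun s => min_le_right _ _) m []
  obtain ⟨b, hG, hlt⟩ := exists_seq (m := m) (P := fun j s => c' s = col j) hu hab
    ⟨fun _ h => absurd h List.not_mem_nil, by
      rintro j hj p rfl r hr l hl hmax
      obtain rfl : l = j := by simpa using hmax
      obtain rfl : m = r + 1 := by simpa using hr.symm
      simpa [Most] using hcol l⟩
  refine ⟨b, ⟨fun n => (hG (n + 1)).1 _ (mem_hist b (Nat.lt_succ_self n)),
    fun n => hlt n (n + 1) (Nat.lt_succ_self n)⟩, ?_⟩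
  intro j hj1 hjk
  have key : ∀ a ∈ TSm k j m b, c a = col j := by
    intro a ha
    have h := color_of_TSm hu hjk hm hG hlt ha
    have hca := hc a ⟨j, hj1, hjk, ha.1⟩
    have heq : (fun d : Fin m => (List.ofFn a : List Blk).getD d 1) = a := by
      funext d
      exact getD_ofFn a d
    simp only [c'] at h
    rw [heq, min_eq_left hca.le] at h
    exact h
  intro a ha a' ha'
  rw [key a ha, key a' ha']
end
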